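/- arXiv:1606.08246 — 7 statements merged into one kernel-verified Lean document; each statement's English description precedes it below -/
import Mathlib

section
/- Let G be a finite bipartite graph and b : V(G) → ℕ. For every b-matching M of G and every set Z ⊆ V(G), |M| ≤ b(V(G) ∖ Z) + |E[Z]| holds; equality holds if and only if (i) E[Z] ⊆ M, (ii) every vertex in V(G) ∖ Z is M-tight, and (iii) E[V(G) ∖ Z] ∩ M = ∅. -/
open scoped symmDiff

variable {V : Type} [Fintype V]

/-- `G` is bipartite with color classes `A` and `B`. -/
structure Bipartition (G : SimpleGraph V) (A B : Set V) : Prop where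
  disjoint : Disjoint A B
  cover : A ∪ B = Set.univ
  between : ∀ ⦃u v : V⦄, G.Adj u v → (u ∈ A ∧ v ∈ B) ∨ (u ∈ B ∧ v ∈ A)

/-- `M` is a `b`-matching of `G`: a set of edges of `G` such that each vertex `v` is
incident to at most `b v` edges of `M`. -/
def IsBMatching (G : SimpleGraph V) (b : V → ℕ) (M : Set (Sym2 V)) : Prop :=
  M ⊆ G.edgeSet ∧ ∀ v : V, {e ∈ M | v ∈ e}.ncard ≤ b v

/-- `M` is a maximum `b`-matching of `G`. -/
def IsMaxBMatching (G : SimpleGraph V) (b : V → ℕ) (M : Set (Sym2 V)) : Prop :=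
  IsBMatching G b M ∧ ∀ N : Set (Sym2 V), IsBMatching G b N → N.ncard ≤ M.ncard

/-- `E[X]`: the set of edges of `G` with both ends in `X`. -/
def edgesIn (G : SimpleGraph V) (X : Set V) : Set (Sym2 V) :=
  {e ∈ G.edgeSet | ∀ v ∈ e, v ∈ X}

/-- `b(X) = ∑_{v ∈ X} b v`. -/
noncomputable def bSum (b : V → ℕ) (X : Set V) : ℕ := ∑ᶠ v ∈ X, b v

/-- `Z` is a `b`-verifying set: `b(Zᶜ) + |E[Z]|` equals the size of a maximum `b`-matching. -/
def IsVerifying (G : SimpleGraph V) (b : V → ℕ) (Z : Set V) : Prop :=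
  ∃ M : Set (Sym2 V), IsMaxBMatching G b M ∧ bSum b Zᶜ + (edgesIn G Z).ncard = M.ncard

/-- `v` is `M`-tight. -/
def IsTight (b : V → ℕ) (M : Set (Sym2 V)) (v : V) : Prop :=
  {e ∈ M | v ∈ e}.ncard = b v

/-- `v` is `M`-loose. -/
def IsLoose (b : V → ℕ) (M : Set (Sym2 V)) (v : V) : Prop :=
  {e ∈ M | v ∈ e}.ncard < b v

/-- `M` is a perfect `b`-matching. -/
def IsPerfect (G : SimpleGraph V) (b : V → ℕ) (M : Set (Sym2 V)) : Prop :=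
  IsBMatching G b M ∧ ∀ v : V, IsTight b M v

/-- An edge is `b`-inevitable if it is an edge of `G` contained in every maximum `b`-matching. -/
def IsInevitable (G : SimpleGraph V) (b : V → ℕ) (e : Sym2 V) : Prop :=
  e ∈ G.edgeSet ∧ ∀ M : Set (Sym2 V), IsMaxBMatching G b M → e ∈ M

/-- An edge is `b`-forbidden if it is an edge of `G` contained in no maximum `b`-matching. -/
def IsForbidden (G : SimpleGraph V) (b : V → ℕ) (e : Sym2 V) : Prop :=
  e ∈ G.edgeSet ∧ ∀ M : Set (Sym2 V), IsMaxBMatching G b M → e ∉ M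

/-- An edge is `b`-flexible if some maximum `b`-matching contains it and some does not. -/
def IsFlexibleEdge (G : SimpleGraph V) (b : V → ℕ) (e : Sym2 V) : Prop :=
  (∃ M : Set (Sym2 V), IsMaxBMatching G b M ∧ e ∈ M) ∧
  (∃ M : Set (Sym2 V), IsMaxBMatching G b M ∧ e ∉ M)

/-- The spanning subgraph of `G` whose edges are the `b`-flexible edges. -/
def flexGraph (G : SimpleGraph V) (b : V → ℕ) : SimpleGraph V where
  Adj u v := IsFlexibleEdge G b s(u, v)
  symm := by
    refine ⟨?_⟩
    intro u v h
    rwa [Sym2.eq_swap] at h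
  loopless := by
    refine ⟨?_⟩
    intro v h
    obtain ⟨⟨M, hM, heM⟩, -⟩ := h
    exact G.loopless.irrefl v ((G.mem_edgeSet).mp (hM.1.1 heM))

/-- A `b`-flexible component of `G`, identified with the corresponding connected
component of the spanning subgraph of flexible edges. -/
abbrev FlexComp (G : SimpleGraph V) (b : V → ℕ) := (flexGraph G b).ConnectedComponent

/-- `D(G;b)`: the set of vertices that are `M`-loose for some maximum `b`-matching `M`. -/
def Dset (G : SimpleGraph V) (b : V → ℕ) : Set V :=
  {v | ∃ M : Set (Sym2 V), IsMaxBMatching G b M ∧ IsLoose b M v}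

/-- `c` is a `b`-loose flexible component. -/
def LooseComp (G : SimpleGraph V) (b : V → ℕ) (c : FlexComp G b) : Prop :=
  ∃ v ∈ c.supp, v ∈ Dset G b

/-- `c` is a `b`-inactive flexible component. -/
def InactiveComp (G : SimpleGraph V) (b : V → ℕ) (c : FlexComp G b) : Prop :=
  ∃ v, c.supp = {v} ∧ b v = 0

/-- `c` is a `b`-inconsistent flexible component. -/
def InconsistentComp (G : SimpleGraph V) (b : V → ℕ) (c : FlexComp G b) : Prop :=
  LooseComp G b c ∨ ∃ v, c.supp = {v} ∧ b v = 0 ∧ ∃ u ∈ Dset G b, G.Adj v u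

/-- `c` is a `b`-consistent flexible component. -/
def ConsistentComp (G : SimpleGraph V) (b : V → ℕ) (c : FlexComp G b) : Prop :=
  ¬ InconsistentComp G b c

/-- `c` is a `b`-loose flexible component hooked up by the color class `W`. -/
def LooseHooked (G : SimpleGraph V) (b : V → ℕ) (W : Set V) (c : FlexComp G b) : Prop :=
  ∃ v ∈ c.supp ∩ W, v ∈ Dset G b

/-- `c` is a `b`-inactive flexible component hooked up by the color class `W`. -/
def InactiveHooked (G : SimpleGraph V) (b : V → ℕ) (W : Set V) (c : FlexComp G b) : Prop :=
  ∃ v, c.supp = {v} ∧ b v = 0 ∧ ∃ u ∈ Dset G b ∩ W, G.Adj v u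

/-- `c` is a `b`-inconsistent flexible component hooked up by the color class `W`. -/
def HookedUp (G : SimpleGraph V) (b : V → ℕ) (W : Set V) (c : FlexComp G b) : Prop :=
  LooseHooked G b W c ∨ InactiveHooked G b W c

/-- `X` is separating: empty or a union of vertex sets of `b`-flexible components. -/
def IsSeparating (G : SimpleGraph V) (b : V → ℕ) (X : Set V) : Prop :=
  ∃ S : Set (FlexComp G b), X = ⋃ c ∈ S, c.supp

/-- The number of edges in the list `es` incident to `v` that lie in `M`. -/
noncomputable def edgeDeg (es : List (Sym2 V)) (M : Set (Sym2 V)) (v : V) : ℕ :=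
  {e : Sym2 V | e ∈ es ∧ v ∈ e ∧ e ∈ M}.ncard

/-- `p` is an `M`-wedge path from `x` to `y`. -/
def IsWedgePath {G : SimpleGraph V} (M : Set (Sym2 V)) {x y : V} (p : G.Walk x y) : Prop :=
  p.IsPath ∧ (∀ v ∈ p.support, v ≠ y → edgeDeg p.edges M v = 1) ∧ edgeDeg p.edges M y = 0

/-- `p` is an `M`-saturated path between `x` and `y`. -/
def IsSaturatedPath {G : SimpleGraph V} (M : Set (Sym2 V)) {x y : V} (p : G.Walk x y) : Prop :=
  p.IsPath ∧ ∀ v ∈ p.support, edgeDeg p.edges M v = 1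

/-- `p` is an `M`-exposed path between `x` and `y`. -/
def IsExposedPath {G : SimpleGraph V} (M : Set (Sym2 V)) {x y : V} (p : G.Walk x y) : Prop :=
  p.IsPath ∧ ∀ v ∈ p.support, edgeDeg p.edges Mᶜ v = 1

/-- `p` is an `(M; A, B)`-ascending path from `u` to `v`. -/
def IsAscending {G : SimpleGraph V} (A B : Set V) (M : Set (Sym2 V)) {u v : V}
    (p : G.Walk u v) : Prop :=
  (u ∈ A → v ∈ A → IsWedgePath M p) ∧
  (u ∈ A → v ∈ B → IsSaturatedPath M p) ∧
  (u ∈ B → v ∈ A → IsExposedPath M p) ∧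
  (u ∈ B → v ∈ B → IsWedgePath M p.reverse)

/-- The one-step relation `⊴_A` on `b`-flexible components: `c₁ ⊴_A c₂` iff `c₁ = c₂`, or
there is a `b`-inevitable edge between `V(c₁) ∩ A` and `V(c₂) ∩ B`, or a `b`-forbidden edge
between `V(c₂) ∩ A` and `V(c₁) ∩ B`. -/
def StepRel (G : SimpleGraph V) (b : V → ℕ) (A B : Set V) (c₁ c₂ : FlexComp G b) : Prop :=
  c₁ = c₂ ∨
  (∃ u ∈ c₁.supp ∩ A, ∃ v ∈ c₂.supp ∩ B, IsInevitable G b s(u, v)) ∨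
  (∃ u ∈ c₂.supp ∩ A, ∃ v ∈ c₁.supp ∩ B, IsForbidden G b s(u, v))

/-- The one-step relation `⊴_A` restricted to `b`-consistent flexible components. -/
def ConsStepRel (G : SimpleGraph V) (b : V → ℕ) (A B : Set V) (c₁ c₂ : FlexComp G b) : Prop :=
  ConsistentComp G b c₁ ∧ ConsistentComp G b c₂ ∧ StepRel G b A B c₁ c₂

/-- `I` is a lower ideal of the relation `r`. -/
def IsLowerIdeal {α : Type*} (r : α → α → Prop) (I : Set α) : Prop :=
  ∀ ⦃c d : α⦄, d ∈ I → r c d → c ∈ I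

/-- `I` is an upper ideal of the relation `r`. -/
def IsUpperIdeal {α : Type*} (r : α → α → Prop) (I : Set α) : Prop :=
  ∀ ⦃c d : α⦄, c ∈ I → r c d → d ∈ I

theorem key_identity (G : SimpleGraph V) (M : Set (Sym2 V)) (hM : M ⊆ G.edgeSet) (Z : Set V) :
    M.ncard + (edgesIn G Zᶜ ∩ M).ncard =
      (∑ᶠ v ∈ Zᶜ, {e ∈ M | v ∈ e}.ncard) + (edgesIn G Z ∩ M).ncard := by
  classical
  have h1 : ∀ (p : Sym2 V → Prop) [DecidablePred p], {e ∈ M | p e}.ncard = (M.toFinset.filter p).card := by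
    intro p _
    rw [← Set.ncard_coe_finset]
    congr 1
    ext e
    simp
  have h2 : ∀ X : Set V, edgesIn G X ∩ M = {e ∈ M | ∀ v ∈ e, v ∈ X} := by
    intro X
    ext e
    simp only [edgesIn, Set.mem_inter_iff, Set.mem_ofPred_eq]
    constructor
    · rintro ⟨⟨_, h⟩, h'⟩
      exact ⟨h', h⟩
    · rintro ⟨h', h⟩
      exact ⟨⟨hM h', h⟩, h'⟩
  have h3 : M.ncard = M.toFinset.card := Set.ncard_eq_toFinset_card' M
  have h4 : (∑ᶠ v ∈ Zᶜ, {e ∈ M | v ∈ e}.ncard)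
      = ∑ v ∈ (Zᶜ).toFinset, (M.toFinset.filter (fun e => v ∈ e)).card := by
    rw [finsum_mem_eq_toFinset_sum]
    exact Finset.sum_congr rfl (fun v _ => h1 (fun e => v ∈ e))
  have h5 : ∑ v ∈ (Zᶜ).toFinset, (M.toFinset.filter (fun e => v ∈ e)).card
      = ∑ e ∈ M.toFinset, ((Zᶜ).toFinset.filter (fun v => v ∈ e)).card :=
    Finset.sum_card_bipartiteAbove_eq_sum_card_bipartiteBelow (fun (v : V) (e : Sym2 V) => v ∈ e)
  rw [h2, h2, h1, h1, h3, h4, h5, Finset.card_filter, Finset.card_filter,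
    Finset.card_eq_sum_ones, ← Finset.sum_add_distrib, ← Finset.sum_add_distrib]
  refine Finset.sum_congr rfl ?_
  intro e he
  have heG : e ∈ G.edgeSet := hM (by simpa using he)
  induction e using Sym2.ind with
  | _ x y =>
    have hxy : x ≠ y := (G.mem_edgeSet.mp heG).ne
    have h6 : (Zᶜ).toFinset.filter (fun v => v ∈ s(x, y))
        = ({x, y} : Finset V).filter (fun v => v ∉ Z) := by
      ext v
      simp [and_comm]
    rw [h6, Finset.filter_insert, Finset.filter_singleton]
    by_cases hx : x ∈ Z <;> by_cases hy : y ∈ Z <;> simp [hx, hy, hxy]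

/-- For every `b`-matching `M` and every `Z ⊆ V(G)`, `|M| ≤ b(Zᶜ) + |E[Z]|`, with equality
iff `E[Z] ⊆ M`, every vertex of `Zᶜ` is `M`-tight, and `E[Zᶜ] ∩ M = ∅`. -/
theorem stmt_1 (G : SimpleGraph V) (A B : Set V) (hG : Bipartition G A B) (b : V → ℕ)
    (M : Set (Sym2 V)) (hM : IsBMatching G b M) (Z : Set V) :
    M.ncard ≤ bSum b Zᶜ + (edgesIn G Z).ncard ∧
    (M.ncard = bSum b Zᶜ + (edgesIn G Z).ncard ↔
      edgesIn G Z ⊆ M ∧ (∀ v ∈ Zᶜ, IsTight b M v) ∧ edgesIn G Zᶜ ∩ M = ∅) := by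
  classical
  have key := key_identity G M hM.1 Z
  have hb : bSum b Zᶜ = ∑ v ∈ (Zᶜ).toFinset, b v := finsum_mem_eq_toFinset_sum _ _
  rw [finsum_mem_eq_toFinset_sum] at key
  have hle : ∀ v ∈ (Zᶜ).toFinset, {e ∈ M | v ∈ e}.ncard ≤ b v := fun v _ => hM.2 v
  have hs := Finset.sum_le_sum hle
  have hE : (edgesIn G Z ∩ M).ncard ≤ (edgesIn G Z).ncard :=
    Set.ncard_le_ncard Set.inter_subset_left (Set.toFinite _)
  have c1 : edgesIn G Z ⊆ M ↔ (edgesIn G Z ∩ M).ncard = (edgesIn G Z).ncard := by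
    rw [← Set.inter_eq_left]
    exact ⟨fun h => by rw [h], fun h =>
      Set.eq_of_subset_of_ncard_le Set.inter_subset_left h.ge (Set.toFinite _)⟩
  have c2 : (∀ v ∈ Zᶜ, IsTight b M v) ↔
      ∑ v ∈ (Zᶜ).toFinset, {e ∈ M | v ∈ e}.ncard = ∑ v ∈ (Zᶜ).toFinset, b v := by
    rw [Finset.sum_eq_sum_iff_of_le hle]
    simp only [Set.mem_toFinset]
    rfl
  have c3 : edgesIn G Zᶜ ∩ M = ∅ ↔ (edgesIn G Zᶜ ∩ M).ncard = 0 :=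
    (Set.ncard_eq_zero (Set.toFinite _)).symm
  rw [c1, c2, c3, hb]
  omega
end

section
/- Let G be a finite bipartite graph, b : V(G) → ℕ, and let M be a b-matching of G. If a set Z ⊆ V(G) satisfies (i) E[Z] ⊆ M, (ii) E[V(G) ∖ Z] ∩ M = ∅, and (iii) every M-loose vertex is contained in Z, then M is a maximum b-matching and Z is a b-verifying set. -/
open scoped symmDiff

variable {V : Type} [Fintype V]

theorem bSum_eq_sum (b : V → ℕ) (X : Set V) (T : Finset V) (h : ∀ v, v ∈ T ↔ v ∈ X) :
    bSum b X = ∑ v ∈ T, b v := by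
  unfold bSum
  rw [finsum_mem_eq_finite_toFinset_sum b (Set.toFinite X)]
  congr 1
  ext v
  simp [h]

open Classical in
/-- Every edge set splits into edges inside `Z` and edges meeting the complement. -/
theorem ncard_le_bSum (G : SimpleGraph V) (b : V → ℕ) (N : Set (Sym2 V))
    (hN : IsBMatching G b N) (Z : Set V) :
    N.ncard ≤ bSum b Zᶜ + (edgesIn G Z).ncard := by
  set T : Finset V := Finset.univ.filter (· ∈ Zᶜ) with hT
  set U : Finset (Sym2 V) := T.biUnion (fun v => {e ∈ N | v ∈ e}.toFinset) with hU
  have hsub : N ⊆ (U : Set (Sym2 V)) ∪ edgesIn G Z := by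
    intro e he
    by_cases h : ∀ v ∈ e, v ∈ Z
    · exact Or.inr ⟨hN.1 he, h⟩
    · push Not at h
      obtain ⟨v, hv, hvZ⟩ := h
      left
      simp only [hU, hT, Finset.coe_biUnion, Set.mem_iUnion]
      exact ⟨v, by simpa using hvZ, by simp [he, hv]⟩
  calc N.ncard ≤ ((U : Set (Sym2 V)) ∪ edgesIn G Z).ncard :=
        Set.ncard_le_ncard hsub (Set.toFinite _)
    _ ≤ (U : Set (Sym2 V)).ncard + (edgesIn G Z).ncard := Set.ncard_union_le _ _
    _ ≤ bSum b Zᶜ + (edgesIn G Z).ncard := by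
        gcongr
        rw [Set.ncard_coe_finset, bSum_eq_sum b Zᶜ T (by simp [hT])]
        refine Finset.card_biUnion_le.trans (Finset.sum_le_sum fun v _ => ?_)
        rw [← Set.ncard_eq_toFinset_card']
        exact hN.2 v

open Classical in
theorem bSum_le_ncard (G : SimpleGraph V) (b : V → ℕ)
    (M : Set (Sym2 V)) (hM : IsBMatching G b M) (Z : Set V)
    (h1 : edgesIn G Z ⊆ M) (h2 : edgesIn G Zᶜ ∩ M = ∅)
    (h3 : ∀ v : V, IsLoose b M v → v ∈ Z) :
    bSum b Zᶜ + (edgesIn G Z).ncard ≤ M.ncard := by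
  set T : Finset V := Finset.univ.filter (· ∈ Zᶜ) with hT
  set U : Finset (Sym2 V) := T.biUnion (fun v => {e ∈ M | v ∈ e}.toFinset) with hU
  have hmem : ∀ e, e ∈ U ↔ ∃ v, v ∉ Z ∧ e ∈ M ∧ v ∈ e := by
    intro e
    simp [hU, hT]
  have hcard : U.card = bSum b Zᶜ := by
    rw [hU, Finset.card_biUnion, bSum_eq_sum b Zᶜ T (by simp [hT])]
    · refine Finset.sum_congr rfl fun v hv => ?_
      rw [← Set.ncard_eq_toFinset_card']
      refine le_antisymm (hM.2 v) (not_lt.mp fun hl => ?_)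
      have hvZ : v ∉ Z := by simpa [hT] using hv
      exact hvZ (h3 v hl)
    · intro u hu v hv huv
      rw [Function.onFun, Finset.disjoint_left]
      intro e heu hev
      simp only [Set.mem_toFinset, Set.mem_setOf_eq] at heu hev
      have huZ : u ∉ Z := by simpa [hT] using hu
      have hvZ : v ∉ Z := by simpa [hT] using hv
      have he : e = s(u, v) := (Sym2.mem_and_mem_iff huv).mp ⟨heu.2, hev.2⟩
      have : e ∈ edgesIn G Zᶜ ∩ M := by
        refine ⟨⟨hM.1 heu.1, ?_⟩, heu.1⟩
        intro w hw
        rw [he, Sym2.mem_iff] at hw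
        rcases hw with rfl | rfl <;> assumption
      rw [h2] at this
      exact this
  have hdisj : Disjoint (U : Set (Sym2 V)) (edgesIn G Z) := by
    rw [Set.disjoint_left]
    intro e he hZ
    obtain ⟨v, hvZ, _, hve⟩ := (hmem e).mp (by simpa using he)
    exact hvZ (hZ.2 v hve)
  rw [← hcard, ← Set.ncard_coe_finset U,
    ← Set.ncard_union_eq hdisj (Set.toFinite _) (Set.toFinite _)]
  refine Set.ncard_le_ncard (Set.union_subset ?_ h1) (Set.toFinite _)
  intro e he
  obtain ⟨v, _, heM, _⟩ := (hmem e).mp (by simpa using he)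
  exact heM

/-- If a `b`-matching `M` and a set `Z` satisfy `E[Z] ⊆ M`, `E[Zᶜ] ∩ M = ∅`, and every
`M`-loose vertex lies in `Z`, then `M` is a maximum `b`-matching and `Z` is a
`b`-verifying set. -/
theorem stmt_3 (G : SimpleGraph V) (A B : Set V) (hG : Bipartition G A B) (b : V → ℕ)
    (M : Set (Sym2 V)) (hM : IsBMatching G b M) (Z : Set V)
    (h1 : edgesIn G Z ⊆ M) (h2 : edgesIn G Zᶜ ∩ M = ∅)
    (h3 : ∀ v : V, IsLoose b M v → v ∈ Z) :
    IsMaxBMatching G b M ∧ IsVerifying G b Z := by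
  have hle := bSum_le_ncard G b M hM Z h1 h2 h3
  have hmax : IsMaxBMatching G b M :=
    ⟨hM, fun N hN => (ncard_le_bSum G b N hN Z).trans hle⟩
  exact ⟨hmax, M, hmax, le_antisymm hle (ncard_le_bSum G b M hM Z)⟩
end

section
/- Let G be a finite bipartite graph and b : V(G) → ℕ. Every edge contained in a b-flexible component of G is b-flexible; that is, for every b-flexible component C of G and every edge e of the induced subgraph C, there exists a maximum b-matching containing e and a maximum b-matching not containing e. -/
open scoped symmDiff

variable {V : Type} [Fintype V]

/-! ### Circulations -/

/-- Integral antisymmetric circulations bounded by `c`. -/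
structure IsCirc {W : Type} [Fintype W] (c f : W → W → ℤ) : Prop where
  anti : ∀ x y, f x y = - f y x
  le : ∀ x y, f x y ≤ c x y
  cons : ∀ x, ∑ y, f x y = 0

/-- Residual arcs. -/
def Resid {W : Type} (c f : W → W → ℤ) (x y : W) : Prop := f x y < c x y

theorem anti_sum_zero {W : Type} (R : Finset W) (h : W → W → ℤ)
    (ha : ∀ x y, h x y = - h y x) : ∑ z ∈ R, ∑ w ∈ R, h z w = 0 := by
  have h1 : ∑ z ∈ R, ∑ w ∈ R, h z w = - ∑ z ∈ R, ∑ w ∈ R, h z w := by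
    conv_lhs => rw [Finset.sum_comm]
    rw [← Finset.sum_neg_distrib]
    refine Finset.sum_congr rfl fun z _ => ?_
    rw [← Finset.sum_neg_distrib]
    exact Finset.sum_congr rfl fun w _ => ha w z
  omega

theorem circ_reach {W : Type} [Fintype W] {c f g : W → W → ℤ}
    (hf : IsCirc c f) (hg : IsCirc c g) {x y : W} (hxy : f x y < g x y) :
    Relation.ReflTransGen (Resid c f) y x := by
  classical
  by_contra hx
  set R : Finset W := Finset.univ.filter fun z => Relation.ReflTransGen (Resid c f) y z with hR
  have e1 : ∑ z ∈ R, ∑ w, (g z w - f z w) = 0 := by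
    refine Finset.sum_eq_zero fun z _ => ?_
    rw [Finset.sum_sub_distrib, hf.cons, hg.cons]; rfl
  have e2 : ∑ z ∈ R, ∑ w ∈ R, (g z w - f z w) = 0 := by
    apply anti_sum_zero R (fun z w => g z w - f z w)
    intro a b
    have := hf.anti a b
    have := hg.anti a b
    omega
  have e3 : ∑ z ∈ R, ∑ w ∈ Rᶜ, (g z w - f z w) = 0 := by
    have : ∑ z ∈ R, ∑ w, (g z w - f z w) = ∑ z ∈ R, ∑ w ∈ R, (g z w - f z w)
        + ∑ z ∈ R, ∑ w ∈ Rᶜ, (g z w - f z w) := by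
      rw [← Finset.sum_add_distrib]
      exact Finset.sum_congr rfl fun z _ => (Finset.sum_add_sum_compl R _).symm
    omega
  have hle : ∀ z ∈ R, ∀ w ∈ Rᶜ, g z w - f z w ≤ 0 := by
    intro z hz w hw
    simp only [hR, Finset.mem_filter, Finset.mem_univ, true_and, Finset.mem_compl] at hz hw
    have : ¬ Resid c f z w := fun h => hw (hz.tail h)
    unfold Resid at this
    have := hg.le z w
    omega
  have hyR : y ∈ R := by simp [hR, Relation.ReflTransGen.refl]
  have hxR : x ∈ Rᶜ := by simpa [hR] using hx
  have e4 := (Finset.sum_eq_zero_iff_of_nonpos (fun z hz =>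
    Finset.sum_nonpos (hle z hz))).1 e3 y hyR
  have e5 := (Finset.sum_eq_zero_iff_of_nonpos (hle y hyR)).1 e4 x hxR
  have := hf.anti x y
  have := hg.anti x y
  omega

open Classical in
/-- One unit along the arc from `u` to `v`. -/
noncomputable def arcUnit {W : Type} (u v x y : W) : ℤ :=
  (if x = u ∧ y = v then 1 else 0) - (if x = v ∧ y = u then 1 else 0)

/-- One unit along a list of vertices. -/
noncomputable def pushL {W : Type} : List W → W → W → ℤ
  | [] => fun _ _ => 0
  | [_] => fun _ _ => 0
  | u :: v :: l => fun x y => arcUnit u v x y + pushL (v :: l) x y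

theorem arcUnit_anti {W : Type} (u v x y : W) : arcUnit u v x y = - arcUnit u v y x := by
  unfold arcUnit
  split_ifs <;> first | rfl | (exfalso; tauto)

theorem pushL_anti {W : Type} (l : List W) (x y : W) : pushL l x y = - pushL l y x := by
  induction l with
  | nil => simp [pushL]
  | cons u l ih =>
    cases l with
    | nil => simp [pushL]
    | cons v l =>
      simp only [pushL]
      rw [ih, arcUnit_anti]
      ring

theorem pushL_notMem {W : Type} (l : List W) (x y : W) (h : x ∉ l) : pushL l x y = 0 := by
  induction l with
  | nil => simp [pushL]
  | cons u l ih =>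
    cases l with
    | nil => simp [pushL]
    | cons v l =>
      simp only [pushL]
      rw [ih (fun h' => h (List.mem_cons_of_mem _ h'))]
      simp only [List.mem_cons, not_or] at h
      simp [arcUnit, h.1, h.2.1]

theorem pushL_into_head {W : Type} (v : W) (l : List W) (h : (v :: l).Nodup) (x : W) :
    pushL (v :: l) x v ≤ 0 := by
  cases l with
  | nil => simp [pushL]
  | cons w l =>
    rw [List.nodup_cons] at h
    simp only [pushL]
    rw [pushL_anti, pushL_notMem _ v x h.1]
    have : v ≠ w := fun e => h.1 (by simp [e])
    simp only [arcUnit, this, and_false, if_false]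
    split_ifs <;> simp

theorem pushL_resid {W : Type} {r : W → W → Prop} (l : List W) (h : l.Nodup)
    (hc : l.IsChain r) (x y : W) : pushL l x y ≤ 1 ∧ (0 < pushL l x y → r x y) := by
  induction l with
  | nil => simp [pushL]
  | cons u l ih =>
    cases l with
    | nil => simp [pushL]
    | cons v l =>
      have hn := List.nodup_cons.1 h
      have hc' := List.isChain_cons_cons.1 hc
      have ih' := ih hn.2 hc'.2
      have huv : u ≠ v := fun e => hn.1 (by simp [e])
      simp only [pushL]
      by_cases hx : x = u
      · subst hx
        rw [pushL_notMem _ _ _ hn.1]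
        simp only [arcUnit, huv, true_and, false_and, if_false]
        try simp only [true_and]
        split_ifs with hy
        · have hy' : y = v := by simpa using hy
          subst hy'
          simp [hc'.1]
        · simp
      · have : arcUnit u v x y ≤ 0 := by
          simp only [arcUnit, hx, false_and, if_false]
          split_ifs <;> simp
        refine ⟨by omega, fun h0 => ih'.2 (by omega)⟩

theorem arcUnit_sum {W : Type} [Fintype W] [DecidableEq W] (u v x : W) :
    ∑ y, arcUnit u v x y = (if x = u then 1 else 0) - (if x = v then 1 else 0) := by
  unfold arcUnit
  rw [Finset.sum_sub_distrib]
  congr 1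
  · by_cases h : x = u <;> simp [h]
  · by_cases h : x = v <;> simp [h]

theorem pushL_sum {W : Type} [Fintype W] [DecidableEq W] (l : List W) (u v x : W)
    (hl : (u :: l).getLast? = some v) :
    ∑ y, pushL (u :: l) x y = (if x = u then 1 else 0) - (if x = v then 1 else 0) := by
  induction l generalizing u with
  | nil =>
    simp at hl
    subst hl
    simp [pushL]
  | cons w l ih =>
    simp only [pushL]
    rw [Finset.sum_add_distrib, arcUnit_sum, ih w (by simpa using hl)]
    ring

theorem exists_simple {W : Type} {r : W → W → Prop} {y x : W}
    (h : Relation.ReflTransGen r y x) :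
    ∃ l : List W, (y :: l).IsChain r ∧ (y :: l).Nodup ∧ (y :: l).getLast? = some x := by
  induction h using Relation.ReflTransGen.head_induction_on with
  | refl => exact ⟨[], by simp⟩
  | @head a b hr _ ih =>
    obtain ⟨l, h1, h2, h3⟩ := ih
    by_cases ha : a ∈ b :: l
    · obtain ⟨s, t, hst⟩ := List.append_of_mem ha
      rw [hst] at h1 h2 h3
      refine ⟨t, h1.right_of_append, (List.nodup_append.1 h2).2.1, ?_⟩
      simpa [List.getLast?_append] using h3
    · exact ⟨b :: l, List.isChain_cons_cons.2 ⟨hr, h1⟩, List.nodup_cons.2 ⟨ha, h2⟩,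
        by simpa using h3⟩

theorem circ_push {W : Type} [Fintype W] {c f : W → W → ℤ} (hf : IsCirc c f) {x y : W}
    (hxy : Resid c f x y) (hne : x ≠ y) (hyx : ¬ Resid c f y x)
    (hr : Relation.ReflTransGen (Resid c f) y x) :
    ∃ g, IsCirc c g ∧ g x y = f x y + 1 := by
  classical
  obtain ⟨l, h1, h2, h3⟩ := exists_simple hr
  have hp := pushL_resid _ h2 h1
  have h0 : pushL (y :: l) x y = 0 := by
    have a1 := pushL_into_head y l h2 x
    have a2 : ¬ 0 < pushL (y :: l) y x := fun h => hyx ((hp y x).2 h)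
    have a3 := pushL_anti (y :: l) x y
    omega
  refine ⟨fun a b => f a b + (arcUnit x y a b + pushL (y :: l) a b), ⟨?_, ?_, ?_⟩, ?_⟩
  · intro a b
    have := hf.anti a b
    have := arcUnit_anti x y a b
    have := pushL_anti (y :: l) a b
    omega
  · intro a b
    by_cases hab : a = x ∧ b = y
    · obtain ⟨rfl, rfl⟩ := hab
      unfold Resid at hxy
      simp only [h0, arcUnit, hne, false_and, if_false, and_self, if_true]
      omega
    · have h4 : arcUnit x y a b ≤ 0 := by
        simp only [arcUnit, hab, if_false]
        split_ifs <;> simp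
      have h5 := hp a b
      have h6 := hf.le a b
      by_cases h7 : 0 < pushL (y :: l) a b
      · have := h5.2 h7
        unfold Resid at this
        omega
      · omega
  · intro a
    simp only [Finset.sum_add_distrib]
    rw [hf.cons, arcUnit_sum, pushL_sum _ _ _ _ h3]
    ring
  · simp only [h0, arcUnit, hne, false_and, if_false, and_self, if_true]
    omega

/-- Mutual reachability in the residual digraph. -/
def Mutual {W : Type} (c f : W → W → ℤ) (x y : W) : Prop :=
  Relation.ReflTransGen (Resid c f) x y ∧ Relation.ReflTransGen (Resid c f) y x

theorem mutual_of_ne {W : Type} [Fintype W] {c f g : W → W → ℤ}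
    (hf : IsCirc c f) (hg : IsCirc c g) {x y : W} (hxy : f x y ≠ g x y) : Mutual c f x y := by
  rcases lt_or_gt_of_ne hxy with h | h
  · refine ⟨Relation.ReflTransGen.single ?_, circ_reach hf hg h⟩
    exact lt_of_lt_of_le h (hg.le x y)
  · have h' : f y x < g y x := by
      have := hf.anti x y
      have := hg.anti x y
      omega
    refine ⟨circ_reach hf hg h', Relation.ReflTransGen.single ?_⟩
    exact lt_of_lt_of_le h' (hg.le y x)

theorem exists_ne_of_mutual {W : Type} [Fintype W] {c f : W → W → ℤ}
    (hf : IsCirc c f) {x y : W} (hne : x ≠ y) (hc : c x y + c y x = 1) (hm : Mutual c f x y) :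
    ∃ g, IsCirc c g ∧ g x y ≠ f x y := by
  have ha := hf.anti x y
  have hl1 := hf.le x y
  have hl2 := hf.le y x
  by_cases h : Resid c f x y
  · obtain ⟨g, hg, he⟩ := circ_push hf h hne (by unfold Resid at *; omega) hm.2
    exact ⟨g, hg, by omega⟩
  · obtain ⟨g, hg, he⟩ := circ_push (x := y) (y := x) hf
      (by unfold Resid at *; omega) hne.symm h hm.1
    have := hg.anti x y
    exact ⟨g, hg, by omega⟩

/-! ### Translation -/

open Classical in
/-- Degree of a vertex. -/
noncomputable def mdeg (M : Set (Sym2 V)) (v : V) : ℤ := ∑ w, if s(v, w) ∈ M then 1 else 0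

theorem mdeg_eq (M : Set (Sym2 V)) (v : V) : mdeg M v = ({e ∈ M | v ∈ e}.ncard : ℤ) := by
  classical
  have : {e ∈ M | v ∈ e} = (fun w => s(v, w)) '' {w | s(v, w) ∈ M} := by
    ext e
    constructor
    · rintro ⟨h1, h2⟩
      obtain ⟨w, rfl⟩ := h2
      exact ⟨w, h1, rfl⟩
    · rintro ⟨w, h, rfl⟩
      exact ⟨h, by simp⟩
  rw [this, Set.ncard_image_of_injective _ (fun a b h => Sym2.congr_right.1 h),
    Set.ncard_eq_toFinset_card']
  simp [mdeg]

theorem sum_mdeg (M : Set (Sym2 V)) (S : Set V) [DecidablePred (· ∈ S)]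
    (hS : ∀ x y, s(x, y) ∈ M → (x ∈ S ↔ y ∉ S)) :
    (∑ v, if v ∈ S then mdeg M v else 0) = (M.ncard : ℤ) := by
  classical
  have : M = (fun p : V × V => s(p.1, p.2)) '' {p | p.1 ∈ S ∧ s(p.1, p.2) ∈ M} := by
    ext e
    constructor
    · intro h
      induction e with
      | _ x y =>
        by_cases hx : x ∈ S
        · exact ⟨(x, y), ⟨hx, h⟩, rfl⟩
        · refine ⟨(y, x), ⟨?_, ?_⟩, Sym2.eq_swap⟩
          · by_contra hy
            exact hx ((hS x y h).2 hy)
          · rwa [Sym2.eq_swap]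
    · rintro ⟨w, h, rfl⟩
      exact h.2
  conv_rhs => rw [this]
  rw [Set.ncard_image_of_injOn, Set.ncard_eq_toFinset_card']
  · simp only [mdeg, Set.toFinset_ofPred, Finset.card_filter, Nat.cast_sum,
      Fintype.sum_prod_type]
    refine Finset.sum_congr rfl fun v _ => ?_
    by_cases hv : v ∈ S <;> simp [hv]
  · rintro ⟨a, b⟩ ⟨h1, h2⟩ ⟨a', b'⟩ ⟨h3, h4⟩ h
    simp only [Sym2.eq_iff] at h
    rcases h with ⟨rfl, rfl⟩ | ⟨rfl, rfl⟩
    · rfl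
    · exact absurd h3 ((hS _ _ h2).1 h1)

open Classical in
/-- Capacities of the flow network with source `inr false` and sink `inr true`. -/
noncomputable def cap (G : SimpleGraph V) (A : Set V) (b : V → ℕ) (m : ℕ) :
    V ⊕ Bool → V ⊕ Bool → ℤ
  | .inl x, .inl y => if G.Adj x y ∧ x ∈ A then 1 else 0
  | .inr false, .inl x => if x ∈ A then b x else 0
  | .inl _, .inr false => 0
  | .inl x, .inr true => if x ∈ A then 0 else b x
  | .inr true, .inl _ => 0
  | .inr true, .inr false => m
  | .inr false, .inr true => -m
  | .inr false, .inr false => 0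
  | .inr true, .inr true => 0

open Classical in
/-- The flow of a matching. -/
noncomputable def flowOf (A : Set V) (M : Set (Sym2 V)) : V ⊕ Bool → V ⊕ Bool → ℤ
  | .inl x, .inl y => if s(x, y) ∈ M then (if x ∈ A then 1 else -1) else 0
  | .inr false, .inl x => if x ∈ A then mdeg M x else 0
  | .inl x, .inr false => if x ∈ A then - mdeg M x else 0
  | .inl x, .inr true => if x ∈ A then 0 else mdeg M x
  | .inr true, .inl x => if x ∈ A then 0 else - mdeg M x
  | .inr true, .inr false => M.ncard
  | .inr false, .inr true => - M.ncard
  | .inr false, .inr false => 0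
  | .inr true, .inr true => 0

theorem bip_iff {G : SimpleGraph V} {A B : Set V} (hG : Bipartition G A B) {x y : V}
    (h : G.Adj x y) : x ∈ A ↔ y ∉ A := by
  have hd : ∀ z, z ∈ A → z ∈ B → False := fun z h1 h2 => Set.disjoint_left.1 hG.disjoint h1 h2
  rcases hG.between h with ⟨h1, h2⟩ | ⟨h1, h2⟩
  · exact ⟨fun _ h3 => hd _ h3 h2, fun _ => h1⟩
  · exact ⟨fun h3 => (hd _ h3 h1).elim, fun h3 => (h3 h2).elim⟩

theorem flowOf_circ {G : SimpleGraph V} {A B : Set V} (hG : Bipartition G A B) {b : V → ℕ}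
    {M : Set (Sym2 V)} (hM : IsBMatching G b M) : IsCirc (cap G A b M.ncard) (flowOf A M) := by
  classical
  have hadj : ∀ x y, s(x, y) ∈ M → G.Adj x y := fun x y h => hM.1 h
  have hiff : ∀ x y, s(x, y) ∈ M → (x ∈ A ↔ y ∉ A) := fun x y h => bip_iff hG (hadj x y h)
  have hdeg0 : ∀ x, 0 ≤ mdeg M x := fun x => by rw [mdeg_eq]; positivity
  have hdeg : ∀ x, mdeg M x ≤ b x := fun x => by
    rw [mdeg_eq]; exact_mod_cast hM.2 x
  refine ⟨?_, ?_, ?_⟩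
  · rintro (x | _ | _) (y | _ | _) <;> simp only [flowOf]
    · rw [Sym2.eq_swap (a := y)]
      by_cases h : s(x, y) ∈ M
      · have := hiff x y h
        by_cases hx : x ∈ A <;> by_cases hy : y ∈ A <;> simp_all
      · simp [h]
    all_goals first | (split_ifs <;> simp) | simp
  · rintro (x | _ | _) (y | _ | _) <;> simp only [flowOf, cap]
    · by_cases h : s(x, y) ∈ M
      · have := hadj x y h
        by_cases hx : x ∈ A <;> simp_all
      · simp only [h, if_false]; split_ifs <;> simp
    all_goals first
      | exact le_refl _
      | (split_ifs <;> first | exact le_refl _ | exact hdeg _ |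
          exact neg_nonpos.2 (hdeg0 _))
  · have s1 := sum_mdeg M A hiff
    have s2 := sum_mdeg M Aᶜ (by
      intro x y h
      have := hiff x y h
      simp only [Set.mem_compl_iff]
      tauto)
    rintro (x | _ | _)
    · rw [Fintype.sum_sum_type]
      simp only [Fintype.sum_bool, flowOf]
      by_cases hx : x ∈ A
      · simp only [hx, if_true, mdeg]; ring
      · have : (∑ y, if s(x, y) ∈ M then (-1 : ℤ) else 0) = - mdeg M x := by
          rw [mdeg, ← Finset.sum_neg_distrib]
          refine Finset.sum_congr rfl fun y _ => ?_
          split_ifs <;> simp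
        simp only [hx, if_false, this]; ring
    · rw [Fintype.sum_sum_type]
      simp only [Fintype.sum_bool, flowOf]
      rw [s1]; ring
    · rw [Fintype.sum_sum_type]
      simp only [Fintype.sum_bool, flowOf]
      have : (∑ y, if y ∈ A then (0 : ℤ) else - mdeg M y) = - M.ncard := by
        rw [← s2, ← Finset.sum_neg_distrib]
        refine Finset.sum_congr rfl fun y _ => ?_
        by_cases hy : y ∈ A <;> simp [hy]
      rw [this]; ring

theorem circ_matching {G : SimpleGraph V} {A B : Set V} (hG : Bipartition G A B) {b : V → ℕ}
    {m : ℕ} {f : V ⊕ Bool → V ⊕ Bool → ℤ} (hf : IsCirc (cap G A b m) f) :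
    ∃ M : Set (Sym2 V), IsBMatching G b M ∧ M.ncard = m ∧
      ∀ x ∈ A, ∀ y, f (.inl x) (.inl y) = 1 ↔ s(x, y) ∈ M := by
  classical
  have hadj : ∀ x y, f (.inl x) (.inl y) = 1 → G.Adj x y ∧ x ∈ A := by
    intro x y h
    have := hf.le (.inl x) (.inl y)
    simp only [cap] at this
    by_contra h'
    simp only [h', if_false] at this
    omega
  set M : Set (Sym2 V) := {e | ∃ x y, e = s(x, y) ∧ f (.inl x) (.inl y) = 1} with hMdef
  have hmem : ∀ x ∈ A, ∀ y, f (.inl x) (.inl y) = 1 ↔ s(x, y) ∈ M := by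
    intro x hx y
    constructor
    · intro h; exact ⟨x, y, rfl, h⟩
    · rintro ⟨x', y', he, h⟩
      rcases Sym2.eq_iff.1 he with ⟨rfl, rfl⟩ | ⟨rfl, rfl⟩
      · exact h
      · have h1 := hadj _ _ h
        exact absurd hx ((bip_iff hG h1.1).1 h1.2)
  have hsub : M ⊆ G.edgeSet := by
    rintro e ⟨x, y, rfl, h⟩
    exact (hadj x y h).1
  have hval : ∀ x ∈ A, ∀ y, f (.inl x) (.inl y) = if s(x, y) ∈ M then 1 else 0 := by
    intro x hx y
    split_ifs with h
    · exact (hmem x hx y).2 h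
    · have h1 : f (.inl x) (.inl y) ≠ 1 := fun h' => h ((hmem x hx y).1 h')
      have h2 := hf.le (.inl x) (.inl y)
      have h3 := hf.le (.inl y) (.inl x)
      have h4 := hf.anti (.inl x) (.inl y)
      simp only [cap] at h2 h3
      have h5 : ¬ (G.Adj y x ∧ y ∈ A) := fun h' => (bip_iff hG h'.1).1 h'.2 hx
      simp only [h5, if_false] at h3
      split_ifs at h2 <;> omega
  have hval0 : ∀ x ∉ A, ∀ y ∉ A, f (.inl x) (.inl y) = 0 := by
    intro x hx y hy
    have h2 := hf.le (.inl x) (.inl y)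
    have h3 := hf.le (.inl y) (.inl x)
    have h4 := hf.anti (.inl x) (.inl y)
    simp only [cap, hx, hy, and_false, if_false] at h2 h3
    omega
  have hiff : ∀ x y, s(x, y) ∈ M → (x ∈ A ↔ y ∉ A) := fun x y h => bip_iff hG (hsub h)
  have hdA : ∀ x ∈ A, f (.inr false) (.inl x) = mdeg M x := by
    intro x hx
    have h1 := hf.cons (.inl x)
    rw [Fintype.sum_sum_type] at h1
    simp only [Fintype.sum_bool] at h1
    have h6 : ∑ y, f (.inl x) (.inl y) = mdeg M x := by
      rw [mdeg]
      refine Finset.sum_congr rfl fun y _ => ?_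
      rw [hval x hx]
      split_ifs <;> rfl
    have h2 := hf.le (.inl x) (.inr true)
    have h3 := hf.le (.inr true) (.inl x)
    have h4 := hf.anti (.inr true) (.inl x)
    have h5 := hf.anti (.inr false) (.inl x)
    simp only [cap, hx, if_true] at h2 h3
    omega
  have hdB : ∀ x ∉ A, f (.inl x) (.inr true) = mdeg M x := by
    intro x hx
    have h1 := hf.cons (.inl x)
    rw [Fintype.sum_sum_type] at h1
    simp only [Fintype.sum_bool] at h1
    have h6 : ∑ y, f (.inl x) (.inl y) = - mdeg M x := by
      rw [mdeg, ← Finset.sum_neg_distrib]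
      refine Finset.sum_congr rfl fun y _ => ?_
      by_cases hy : y ∈ A
      · rw [hf.anti, hval y hy, Sym2.eq_swap]
        split_ifs <;> rfl
      · rw [hval0 x hx y hy, if_neg]
        · rfl
        · intro h
          exact hx ((hiff x y h).2 hy)
    have h2 := hf.le (.inl x) (.inr false)
    have h3 := hf.le (.inr false) (.inl x)
    have h5 := hf.anti (.inr false) (.inl x)
    simp only [cap, hx, if_false] at h2 h3
    omega
  refine ⟨M, ⟨hsub, ?_⟩, ?_, hmem⟩
  · intro v
    have h := mdeg_eq M v
    by_cases hv : v ∈ A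
    · have h1 := hf.le (.inr false) (.inl v)
      rw [hdA v hv] at h1
      simp only [cap, hv, if_true] at h1
      omega
    · have h1 := hf.le (.inl v) (.inr true)
      rw [hdB v hv] at h1
      simp only [cap, hv, if_false] at h1
      omega
  · have s1 := sum_mdeg M A hiff
    have h1 := hf.cons (.inr false)
    rw [Fintype.sum_sum_type] at h1
    simp only [Fintype.sum_bool] at h1
    have h2 : ∑ x, f (.inr false) (.inl x) = M.ncard := by
      rw [← s1]
      refine Finset.sum_congr rfl fun x _ => ?_
      by_cases hx : x ∈ A
      · rw [if_pos hx, hdA x hx]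
      · have h2 := hf.le (.inl x) (.inr false)
        have h3 := hf.le (.inr false) (.inl x)
        have h5 := hf.anti (.inr false) (.inl x)
        simp only [cap, hx, if_false] at h2 h3
        simp only [hx, if_false]
        omega
    have h3 := hf.le (.inr false) (.inr false)
    have h4 := hf.anti (.inr false) (.inr false)
    have h5 := hf.le (.inr false) (.inr true)
    have h6 := hf.le (.inr true) (.inr false)
    have h7 := hf.anti (.inr false) (.inr true)
    simp only [cap] at h3 h5 h6
    omega

theorem flex_of_adj {G : SimpleGraph V} {A B : Set V} (hG : Bipartition G A B) {b : V → ℕ}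
    {M : Set (Sym2 V)} (hM : IsMaxBMatching G b M) {x y : V} (hx : x ∈ A) (hxy : G.Adj x y)
    (hm : Mutual (cap G A b M.ncard) (flowOf A M) (.inl x) (.inl y)) :
    IsFlexibleEdge G b s(x, y) := by
  classical
  have hy := (bip_iff hG hxy).1 hx
  obtain ⟨g, hg, hne⟩ := exists_ne_of_mutual (flowOf_circ hG hM.1)
    (by simpa using hxy.ne) (by simp [cap, hx, hy, hxy]) hm
  obtain ⟨N, hN, hNc, hNm⟩ := circ_matching hG hg
  have hNmax : IsMaxBMatching G b N := ⟨hN, fun N' h => hNc ▸ hM.2 N' h⟩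
  have h1 := hNm x hx y
  by_cases h : s(x, y) ∈ M
  · refine ⟨⟨M, hM, h⟩, ⟨N, hNmax, fun h' => hne ?_⟩⟩
    rw [h1.2 h']
    simp [flowOf, h, hx]
  · refine ⟨⟨N, hNmax, h1.1 ?_⟩, ⟨M, hM, h⟩⟩
    have h2 := hg.le (.inl x) (.inl y)
    have h3 := hg.le (.inl y) (.inl x)
    have h4 := hg.anti (.inl x) (.inl y)
    simp only [flowOf, h, if_false] at hne
    simp only [cap, hxy, hx, hy, and_self, and_false, if_true, if_false] at h2 h3
    omega

theorem mutual_of_flex {G : SimpleGraph V} {A B : Set V} (hG : Bipartition G A B) {b : V → ℕ}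
    {M : Set (Sym2 V)} (hM : IsMaxBMatching G b M) {x y : V}
    (h : IsFlexibleEdge G b s(x, y)) :
    Mutual (cap G A b M.ncard) (flowOf A M) (.inl x) (.inl y) := by
  classical
  have key : ∀ N, IsMaxBMatching G b N → ¬ (s(x, y) ∈ M ↔ s(x, y) ∈ N) →
      Mutual (cap G A b M.ncard) (flowOf A M) (.inl x) (.inl y) := by
    intro N hN hne
    have hc : N.ncard = M.ncard := le_antisymm (hM.2 N hN.1) (hN.2 M hM.1)
    have hg := flowOf_circ hG hN.1
    rw [hc] at hg
    refine mutual_of_ne (flowOf_circ hG hM.1) hg ?_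
    simp only [flowOf]
    by_cases h1 : s(x, y) ∈ M <;> by_cases h2 : s(x, y) ∈ N <;> by_cases h3 : x ∈ A <;>
      simp_all
  obtain ⟨⟨N1, hN1, h1⟩, ⟨N2, hN2, h2⟩⟩ := h
  by_cases h : s(x, y) ∈ M
  · exact key N2 hN2 (by tauto)
  · exact key N1 hN1 (by tauto)

theorem mutual_of_reachable {G : SimpleGraph V} {A B : Set V} (hG : Bipartition G A B)
    {b : V → ℕ} {M : Set (Sym2 V)} (hM : IsMaxBMatching G b M) {x y : V}
    (p : (flexGraph G b).Walk x y) :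
    Mutual (cap G A b M.ncard) (flowOf A M) (.inl x) (.inl y) := by
  induction p with
  | nil => exact ⟨.refl, .refl⟩
  | cons h _ ih =>
    have h1 := mutual_of_flex hG hM h
    exact ⟨h1.1.trans ih.1, ih.2.trans h1.2⟩

theorem exists_max (G : SimpleGraph V) (b : V → ℕ) : ∃ M, IsMaxBMatching G b M := by
  obtain ⟨M, h1, h2⟩ := Set.exists_max_image {N : Set (Sym2 V) | IsBMatching G b N}
    Set.ncard (Set.toFinite _) ⟨∅, by simp [IsBMatching]⟩
  exact ⟨M, h1, h2⟩

/-- Every edge contained in a `b`-flexible component is `b`-flexible: some maximum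
`b`-matching contains it and some does not. -/
theorem stmt_12 (G : SimpleGraph V) (A B : Set V) (hG : Bipartition G A B) (b : V → ℕ)
    (c : FlexComp G b) (e : Sym2 V) (he : e ∈ edgesIn G c.supp) :
    (∃ M : Set (Sym2 V), IsMaxBMatching G b M ∧ e ∈ M) ∧
    (∃ M : Set (Sym2 V), IsMaxBMatching G b M ∧ e ∉ M) := by
  obtain ⟨M, hM⟩ := exists_max G b
  obtain ⟨he1, he2⟩ := he
  have main : ∀ x y, x ∈ A → G.Adj x y → x ∈ c.supp → y ∈ c.supp →
      IsFlexibleEdge G b s(x, y) := by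
    intro x y hx hxy hxc hyc
    have hr : (flexGraph G b).Reachable x y := by
      rw [SimpleGraph.ConnectedComponent.mem_supp_iff] at hxc hyc
      exact SimpleGraph.ConnectedComponent.eq.1 (hxc.trans hyc.symm)
    obtain ⟨p⟩ := hr
    exact flex_of_adj hG hM hx hxy (mutual_of_reachable hG hM p)
  induction e with
  | _ x y =>
    have hxy : G.Adj x y := he1
    have hxc := he2 x (by simp)
    have hyc := he2 y (by simp)
    by_cases hx : x ∈ A
    · exact main x y hx hxy hxc hyc
    · have hy : y ∈ A := by
        by_contra h
        exact hx ((bip_iff hG hxy).2 h)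
      have := main y x hy hxy.symm hyc hxc
      rw [Sym2.eq_swap] at this
      exact this
end

section
/- Let G be a finite bipartite graph with color classes A and B, and b : V(G) → ℕ. The binary relation ⪯_A, defined on the set of b-consistent flexible components by chains of one-step relations ⊴_A through b-consistent flexible components, is a partial order (reflexive, transitive, and antisymmetric). -/
open scoped symmDiff

variable {V : Type} [Fintype V]

namespace BM

open Classical

/-- The `M`-orientation of `G`. -/
def Arc (G : SimpleGraph V) (A B : Set V) (M : Set (Sym2 V)) (x y : V) : Prop :=
  G.Adj x y ∧ ((x ∈ A ∧ s(x, y) ∈ M) ∨ (x ∈ B ∧ s(x, y) ∉ M))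

/-- Integer indicator. -/
noncomputable def ind (p : Prop) : ℤ := if p then 1 else 0

lemma ind_true {p : Prop} (h : p) : ind p = 1 := if_pos h
lemma ind_false {p : Prop} (h : ¬ p) : ind p = 0 := if_neg h
lemma ind_nonneg (p : Prop) : 0 ≤ ind p := by unfold ind; split_ifs <;> simp

lemma deg_eq (M : Set (Sym2 V)) (w : V) :
    (({e ∈ M | w ∈ e}.ncard : ℕ) : ℤ) = ∑ y, ind (s(w, y) ∈ M) := by
  have h1 : {e ∈ M | w ∈ e} = (fun y => s(w, y)) '' {y | s(w, y) ∈ M} := by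
    ext e
    simp only [Set.mem_ofPred_eq, Set.mem_image]
    constructor
    · rintro ⟨he, y, rfl⟩
      exact ⟨y, he, rfl⟩
    · rintro ⟨y, hy, rfl⟩
      exact ⟨hy, by simp⟩
  rw [h1, Set.ncard_image_of_injective]
  · have : {y | s(w, y) ∈ M} = ((Finset.univ.filter fun y => s(w, y) ∈ M : Finset V) : Set V) := by
      ext; simp
    rw [this, Set.ncard_coe_finset]
    simp [ind, Finset.sum_boole]
  · intro x y h
    exact Sym2.congr_right.1 h

lemma sum_deg (G : SimpleGraph V) (M : Set (Sym2 V)) (hM : M ⊆ G.edgeSet) :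
    ∑ w, {e ∈ M | w ∈ e}.ncard = 2 * M.ncard := by
  have h1 : ∀ w, {e ∈ M | w ∈ e}.ncard = ∑ e ∈ M.toFinset, if w ∈ e then 1 else 0 := by
    intro w
    rw [Finset.sum_boole]
    rw [← Set.ncard_coe_finset]
    simp
  simp_rw [h1]
  rw [Finset.sum_comm]
  have h2 : ∀ e ∈ M.toFinset, (∑ w : V, if w ∈ e then 1 else 0) = 2 := by
    intro e he
    have he' : ¬ e.IsDiag := G.not_isDiag_of_mem_edgeSet (hM (by simpa using he))
    rw [Finset.sum_boole, ← Sym2.card_toFinset_of_not_isDiag e he']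
    simp only [Nat.cast_id]
    congr 1
    ext; simp
  rw [Finset.sum_congr rfl h2, Finset.sum_const, Set.ncard_eq_toFinset_card']
  simp [mul_comm]

lemma exists_max (G : SimpleGraph V) (b : V → ℕ) : ∃ M, IsMaxBMatching G b M := by
  have hne : {M | IsBMatching G b M}.Nonempty := ⟨∅, by simp [IsBMatching]⟩
  obtain ⟨M, hM, h⟩ := Set.exists_max_image {M | IsBMatching G b M} Set.ncard (Set.toFinite _) hne
  exact ⟨M, hM, h⟩

/-- Chains of given length. -/
def Pn (r : V → V → Prop) (a : V) : ℕ → V → Prop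
  | 0, x => x = a
  | n + 1, x => ∃ y, Pn r a n y ∧ r y x

lemma flow (r : V → V → Prop) (a u : V) (h : Relation.ReflTransGen r a u) :
    ∃ F : V → V → Prop, (∀ x y, F x y → r x y) ∧ (∀ y, ¬ F u y) ∧
      ∀ w, ∑ y, (ind (F w y) - ind (F y w)) = ind (w = a) - ind (w = u) := by
  have hP : ∀ x, Relation.ReflTransGen r a x → ∃ n, Pn r a n x := by
    intro x hx
    induction hx with
    | refl => exact ⟨0, rfl⟩
    | tail _ hyz ih =>
      obtain ⟨n, hn⟩ := ih
      exact ⟨n + 1, _, hn, hyz⟩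
  let d : V → ℕ := fun x => sInf {n | Pn r a n x}
  have key : ∀ n x, d x = n → (∃ n, Pn r a n x) →
      ∃ F : V → V → Prop, (∀ x y, F x y → r x y) ∧ (∀ y z, F y z → d y < n) ∧
      ∀ w, ∑ y, (ind (F w y) - ind (F y w)) = ind (w = a) - ind (w = x) := by
    intro n
    induction n using Nat.strong_induction_on with
    | _ n ih =>
      intro x hx hex
      have hmem : Pn r a (d x) x := Nat.sInf_mem hex
      rw [hx] at hmem
      cases n with
      | zero =>
        have : x = a := hmem
        subst this
        exact ⟨fun _ _ => False, by simp, by simp, by simp⟩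
      | succ n =>
        obtain ⟨y, hy, hyx⟩ := hmem
        have hdy : d y ≤ n := Nat.sInf_le hy
        obtain ⟨F, hF1, hF2, hF3⟩ := ih (d y) (by omega) y rfl ⟨n, hy⟩
        have hnF : ¬ F y x := fun h => lt_irrefl _ (hF2 _ _ h)
        refine ⟨fun p q => F p q ∨ (p = y ∧ q = x), ?_, ?_, ?_⟩
        · rintro p q (h | ⟨rfl, rfl⟩)
          · exact hF1 _ _ h
          · exact hyx
        · rintro p q (h | ⟨rfl, rfl⟩)
          · have := hF2 _ _ h
            omega
          · omega
        · intro w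
          have e : ∀ p q, ind (F p q ∨ (p = y ∧ q = x)) = ind (F p q) + ind (p = y ∧ q = x) := by
            intro p q
            by_cases h : p = y ∧ q = x
            · obtain ⟨rfl, rfl⟩ := h
              simp [ind, hnF]
            · simp [ind, h]
          have e1 : ∑ z, ind (w = y ∧ z = x) = ind (w = y) := by
            by_cases h : w = y <;> simp [ind, h]
          have e2 : ∑ z, ind (z = y ∧ w = x) = ind (w = x) := by
            by_cases h : w = x <;> simp [ind, h]
          have e3 := hF3 w
          simp only [Finset.sum_sub_distrib] at e3
          simp only [e, Finset.sum_sub_distrib, Finset.sum_add_distrib, e1, e2]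
          linarith
  obtain ⟨F, h1, h2, h3⟩ := key (d u) u rfl (hP u h)
  exact ⟨F, h1, fun y hy => lt_irrefl _ (h2 _ _ hy), h3⟩

lemma notB {G : SimpleGraph V} {A B : Set V} (hG : Bipartition G A B) {x : V} (h : x ∈ A) :
    x ∉ B := fun h' => Set.disjoint_left.1 hG.disjoint h h'

lemma memAB {G : SimpleGraph V} {A B : Set V} (hG : Bipartition G A B) (x : V) :
    x ∈ A ∨ x ∈ B := by
  have : x ∈ A ∪ B := by rw [hG.cover]; trivial
  exact this

/-- Flipping a circulation. -/
lemma flip (G : SimpleGraph V) (A B : Set V) (hG : Bipartition G A B) (b : V → ℕ)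
    (M : Set (Sym2 V)) (hM : IsMaxBMatching G b M) (F : V → V → Prop)
    (hF : ∀ x y, F x y → Arc G A B M x y)
    (hbal : ∀ w, ∑ y, (ind (F w y) - ind (F y w)) = 0) :
    ∃ M', IsMaxBMatching G b M' ∧ ∀ x y, F x y → (s(x, y) ∈ M' ↔ s(x, y) ∉ M) := by
  let S : Set (Sym2 V) := {e | ∃ x y, F x y ∧ e = s(x, y)}
  have hS : ∀ x y, s(x, y) ∈ S ↔ (F x y ∨ F y x) := by
    intro x y
    constructor
    · rintro ⟨p, q, h, he⟩
      rcases Sym2.eq_iff.1 he with ⟨rfl, rfl⟩ | ⟨rfl, rfl⟩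
      · exact Or.inl h
      · exact Or.inr h
    · rintro (h | h)
      · exact ⟨x, y, h, rfl⟩
      · exact ⟨y, x, h, Sym2.eq_swap⟩
  let M' : Set (Sym2 V) := {e | (e ∈ M ∧ e ∉ S) ∨ (e ∉ M ∧ e ∈ S)}
  have hM'e : M' ⊆ G.edgeSet := by
    rintro e (⟨h, -⟩ | ⟨-, x, y, h, rfl⟩)
    · exact hM.1.1 h
    · exact (hF _ _ h).1
  have hM' : ∀ x y, s(x, y) ∈ M' ↔
      ((s(x, y) ∈ M ∧ ¬ (F x y ∨ F y x)) ∨ (s(x, y) ∉ M ∧ (F x y ∨ F y x))) := by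
    intro x y
    rw [← hS]; rfl
  have hdeg : ∀ w, {e ∈ M' | w ∈ e}.ncard = {e ∈ M | w ∈ e}.ncard := by
    intro w
    zify
    rw [deg_eq, deg_eq]
    have hw := hbal w
    rcases memAB hG w with hA | hB
    · have : ∀ y, ind (s(w, y) ∈ M') = ind (s(w, y) ∈ M) - (ind (F w y) - ind (F y w)) := by
        intro y
        have hB := notB hG hA
        have h1 : F w y → s(w, y) ∈ M := fun h => by
          rcases (hF _ _ h).2 with h | h
          · exact h.2
          · exact absurd h.1 hB
        have h2 : F y w → s(w, y) ∉ M := fun h => by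
          rw [Sym2.eq_swap]
          rcases hG.between (hF _ _ h).1 with h' | h'
          · exact absurd h'.2 hB
          · rcases (hF _ _ h).2 with h | h
            · exact absurd h'.1 (notB hG h.1)
            · exact h.2
        have h3 := hM' w y
        by_cases a1 : s(w, y) ∈ M <;> by_cases a2 : F w y <;> by_cases a3 : F y w <;>
          simp_all [ind]
      simp only [this, Finset.sum_sub_distrib] at hw ⊢
      linarith
    · have hA : w ∉ A := fun h => notB hG h hB
      have : ∀ y, ind (s(w, y) ∈ M') = ind (s(w, y) ∈ M) + (ind (F w y) - ind (F y w)) := by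
        intro y
        have h1 : F w y → s(w, y) ∉ M := fun h => by
          rcases (hF _ _ h).2 with h | h
          · exact absurd h.1 hA
          · exact h.2
        have h2 : F y w → s(w, y) ∈ M := fun h => by
          rw [Sym2.eq_swap]
          rcases hG.between (hF _ _ h).1 with h' | h'
          · rcases (hF _ _ h).2 with h | h
            · exact h.2
            · exact absurd h.1 (notB hG h'.1)
          · exact absurd h'.2 hA
        have h3 := hM' w y
        by_cases a1 : s(w, y) ∈ M <;> by_cases a2 : F w y <;> by_cases a3 : F y w <;>
          simp_all [ind]
      simp only [this, Finset.sum_add_distrib, hw]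
      linarith
  have hcard : M'.ncard = M.ncard := by
    have h1 := sum_deg G M hM.1.1
    have h2 := sum_deg G M' hM'e
    simp only [hdeg] at h2
    omega
  refine ⟨M', ⟨⟨hM'e, fun v => (hdeg v).le.trans (hM.1.2 v)⟩, fun N hN => ?_⟩, ?_⟩
  · rw [hcard]; exact hM.2 N hN
  · intro x y h
    rw [hM']
    tauto

/-- An arc on a closed walk can be flipped. -/
lemma flip_arc (G : SimpleGraph V) (A B : Set V) (hG : Bipartition G A B) (b : V → ℕ)
    (M : Set (Sym2 V)) (hM : IsMaxBMatching G b M) (u v : V) (huv : Arc G A B M u v)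
    (h : Relation.ReflTransGen (Arc G A B M) v u) :
    ∃ M', IsMaxBMatching G b M' ∧ (s(u, v) ∈ M' ↔ s(u, v) ∉ M) := by
  obtain ⟨F, h1, h2, h3⟩ := flow _ _ _ h
  obtain ⟨M', hM', h'⟩ := flip G A B hG b M hM (fun p q => F p q ∨ (p = u ∧ q = v)) (by
    rintro p q (h | ⟨rfl, rfl⟩)
    · exact h1 _ _ h
    · exact huv) (by
    intro w
    have e : ∀ p q, ind (F p q ∨ (p = u ∧ q = v)) = ind (F p q) + ind (p = u ∧ q = v) := by
      intro p q
      by_cases h : p = u ∧ q = v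
      · obtain ⟨rfl, rfl⟩ := h
        simp [ind, h2]
      · simp [ind, h]
    have e1 : ∑ z, ind (w = u ∧ z = v) = ind (w = u) := by
      by_cases h : w = u <;> simp [ind, h]
    have e2 : ∑ z, ind (z = u ∧ w = v) = ind (w = v) := by
      by_cases h : w = v <;> simp [ind, h]
    have e3 := h3 w
    simp only [Finset.sum_sub_distrib] at e3
    simp only [e, Finset.sum_sub_distrib, Finset.sum_add_distrib, e1, e2]
    linarith)
  exact ⟨M', hM', h' u v (Or.inr ⟨rfl, rfl⟩)⟩

lemma tight_of_cons {G : SimpleGraph V} {b : V → ℕ} {c : FlexComp G b}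
    (hc : ConsistentComp G b c) {v : V} (hv : v ∈ c.supp) {M : Set (Sym2 V)}
    (hM : IsMaxBMatching G b M) : {e ∈ M | v ∈ e}.ncard = b v := by
  by_contra hne
  exact hc (Or.inl ⟨v, hv, M, hM, lt_of_le_of_ne (hM.1.2 v) hne⟩)

/-- Flexible arcs in consistent components can be returned. -/
lemma return_arc (G : SimpleGraph V) (A B : Set V) (hG : Bipartition G A B) (b : V → ℕ)
    (M : Set (Sym2 V)) (hM : IsMaxBMatching G b M) (c : FlexComp G b)
    (hc : ConsistentComp G b c) (u v : V) (hv : v ∈ c.supp)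
    (huv : Arc G A B M u v) (hfl : IsFlexibleEdge G b s(u, v)) :
    Relation.ReflTransGen (Arc G A B M) v u := by
  obtain ⟨M', hM', hd⟩ : ∃ M', IsMaxBMatching G b M' ∧ (s(u, v) ∈ M' ↔ s(u, v) ∉ M) := by
    obtain ⟨⟨M1, h1, h1'⟩, ⟨M2, h2, h2'⟩⟩ := hfl
    by_cases h : s(u, v) ∈ M
    · exact ⟨M2, h2, by tauto⟩
    · exact ⟨M1, h1, by tauto⟩
  let X : V → V → Prop := fun x y => Arc G A B M x y ∧ (s(x, y) ∈ M' ↔ s(x, y) ∉ M)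
  by_contra hcon
  have hXr : ∀ x, Relation.ReflTransGen X v x → Relation.ReflTransGen (Arc G A B M) v x :=
    fun x hx => Relation.ReflTransGen.mono (fun _ _ h => h.1) _ _ hx
  let R : Finset V := Finset.univ.filter fun x => Relation.ReflTransGen X v x
  have hR : ∀ x, x ∈ R ↔ Relation.ReflTransGen X v x := by simp [R]
  have hXflex : ∀ x y, X x y → (flexGraph G b).Adj x y := by
    rintro x y ⟨_, h⟩
    show IsFlexibleEdge G b s(x, y)
    by_cases h' : s(x, y) ∈ M
    · exact ⟨⟨M, hM, h'⟩, ⟨M', hM', by tauto⟩⟩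
    · exact ⟨⟨M', hM', by tauto⟩, ⟨M, hM, h'⟩⟩
  have hRc : ∀ x ∈ R, x ∈ c.supp := by
    intro x hx
    rw [hR] at hx
    induction hx with
    | refl => exact hv
    | tail _ h ih => exact (SimpleGraph.ConnectedComponent.mem_supp_congr_adj c (hXflex _ _ h)).1 ih
  have hXnot : ∀ x y, (s(x, y) ∈ M' ↔ s(x, y) ∉ M) → G.Adj x y := by
    intro x y h
    by_cases h' : s(x, y) ∈ M
    · exact hM.1.1 h'
    · exact hM'.1.1 (h.2 h')
  have hbal : ∀ w ∈ R, ∑ y, (ind (X w y) - ind (X y w)) = 0 := by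
    intro w hw
    have t1 := tight_of_cons hc (hRc w hw) hM
    have t2 := tight_of_cons hc (hRc w hw) hM'
    have t3 : (({e ∈ M | w ∈ e}.ncard : ℕ) : ℤ) = (({e ∈ M' | w ∈ e}.ncard : ℕ) : ℤ) := by
      rw [t1, t2]
    rw [deg_eq, deg_eq] at t3
    rcases memAB hG w with hA | hB
    · have : ∀ y, ind (X w y) - ind (X y w) = ind (s(w, y) ∈ M) - ind (s(w, y) ∈ M') := by
        intro y
        have hB := notB hG hA
        have h1 : X w y ↔ s(w, y) ∈ M ∧ s(w, y) ∉ M' := by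
          constructor
          · rintro ⟨⟨_, h⟩, h'⟩
            tauto
          · intro h
            exact ⟨⟨hM.1.1 h.1, Or.inl ⟨hA, h.1⟩⟩, by tauto⟩
        have h2 : X y w ↔ s(w, y) ∉ M ∧ s(w, y) ∈ M' := by
          rw [Sym2.eq_swap]
          constructor
          · rintro ⟨⟨ha, h⟩, h'⟩
            rcases hG.between ha with h3 | h3
            · exact absurd h3.2 hB
            · have : y ∉ A := fun h => notB hG h h3.1
              tauto
          · intro h
            have ha : G.Adj y w := hM'.1.1 h.2
            refine ⟨⟨ha, Or.inr ⟨?_, h.1⟩⟩, by tauto⟩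
            rcases hG.between ha with h3 | h3
            · exact absurd h3.2 hB
            · exact h3.1
        rw [h1, h2]
        by_cases a1 : s(w, y) ∈ M <;> by_cases a2 : s(w, y) ∈ M' <;> simp [ind, a1, a2]
      simp only [this, Finset.sum_sub_distrib]
      linarith
    · have hA : w ∉ A := fun h => notB hG h hB
      have : ∀ y, ind (X w y) - ind (X y w) = ind (s(w, y) ∈ M') - ind (s(w, y) ∈ M) := by
        intro y
        have h1 : X w y ↔ s(w, y) ∉ M ∧ s(w, y) ∈ M' := by
          constructor
          · rintro ⟨⟨_, h⟩, h'⟩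
            tauto
          · intro h
            exact ⟨⟨hM'.1.1 h.2, Or.inr ⟨hB, h.1⟩⟩, by tauto⟩
        have h2 : X y w ↔ s(w, y) ∈ M ∧ s(w, y) ∉ M' := by
          rw [Sym2.eq_swap]
          constructor
          · rintro ⟨⟨ha, h⟩, h'⟩
            rcases hG.between ha with h3 | h3
            · have := notB hG h3.1
              tauto
            · exact absurd h3.2 hA
          · intro h
            have ha : G.Adj y w := hM.1.1 h.1
            refine ⟨⟨ha, Or.inl ⟨?_, h.1⟩⟩, by tauto⟩
            rcases hG.between ha with h3 | h3
            · exact h3.1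
            · exact absurd h3.2 hA
        rw [h1, h2]
        by_cases a1 : s(w, y) ∈ M <;> by_cases a2 : s(w, y) ∈ M' <;> simp [ind, a1, a2]
      simp only [this, Finset.sum_sub_distrib]
      linarith
  have hsum : ∑ w ∈ R, ∑ y, (ind (X w y) - ind (X y w)) = 0 := Finset.sum_eq_zero hbal
  have hsplit : ∀ w, ∑ y, (ind (X w y) - ind (X y w)) =
      ∑ y ∈ R, (ind (X w y) - ind (X y w)) + ∑ y ∈ Rᶜ, (ind (X w y) - ind (X y w)) :=
    fun w => (Finset.sum_add_sum_compl R _).symm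
  have hin : ∑ w ∈ R, ∑ y ∈ R, (ind (X w y) - ind (X y w)) = 0 := by
    simp only [Finset.sum_sub_distrib]
    rw [sub_eq_zero]
    exact Finset.sum_comm
  have hout : ∀ w ∈ R, ∀ y ∈ Rᶜ, ind (X w y) - ind (X y w) ≤ 0 := by
    intro w hw y hy
    have : ¬ X w y := by
      intro h
      rw [Finset.mem_compl, hR] at hy
      exact hy (((hR w).1 hw).tail h)
    rw [ind_false this]
    have := ind_nonneg (X y w)
    linarith
  have hvR : v ∈ R := (hR v).2 .refl
  have huR : u ∈ Rᶜ := by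
    rw [Finset.mem_compl, hR]
    exact fun h => hcon (hXr u h)
  have hlt : ∑ w ∈ R, ∑ y ∈ Rᶜ, (ind (X w y) - ind (X y w)) < 0 := by
    apply Finset.sum_neg' (fun w hw => Finset.sum_nonpos (hout w hw))
    refine ⟨v, hvR, Finset.sum_neg' (hout v hvR) ⟨u, huR, ?_⟩⟩
    have h1 : X u v := ⟨huv, hd⟩
    have h2 : ¬ X v u := by
      intro h
      rw [Finset.mem_compl, hR] at huR
      exact huR (((hR v).1 hvR).tail h)
    rw [ind_true h1, ind_false h2]
    norm_num
  simp only [hsplit, Finset.sum_add_distrib, hin] at hsum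
  linarith

lemma reach_in (G : SimpleGraph V) (A B : Set V) (hG : Bipartition G A B) (b : V → ℕ)
    (M : Set (Sym2 V)) (hM : IsMaxBMatching G b M) (c : FlexComp G b)
    (hc : ConsistentComp G b c) (x y : V) (hx : x ∈ c.supp) (hy : y ∈ c.supp) :
    Relation.ReflTransGen (Arc G A B M) x y := by
  have hr : (flexGraph G b).Reachable x y := by
    rw [SimpleGraph.ConnectedComponent.mem_supp_iff] at hx hy
    exact SimpleGraph.ConnectedComponent.exact (hx.trans hy.symm)
  rw [SimpleGraph.reachable_iff_reflTransGen] at hr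
  clear hy
  induction hr with
  | refl => exact .refl
  | @tail p q hp hpq ih =>
    refine ih.trans ?_
    have hpc : p ∈ c.supp := by
      rw [SimpleGraph.ConnectedComponent.mem_supp_iff] at hx ⊢
      rw [← hx]
      exact (SimpleGraph.ConnectedComponent.sound
        ((SimpleGraph.reachable_iff_reflTransGen _ _).2 hp)).symm
    have hadj : G.Adj p q := by
      obtain ⟨⟨N, hN, h⟩, -⟩ := hpq
      exact hN.1.1 h
    have hor : Arc G A B M p q ∨ Arc G A B M q p := by
      unfold Arc
      rw [Sym2.eq_swap (a := q)]
      have := hadj.symm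
      have := hG.between hadj
      tauto
    rcases hor with h | h
    · exact .single h
    · exact return_arc G A B hG b M hM c hc q p hpc h hpq.symm

lemma step_arc {G : SimpleGraph V} {A B : Set V} {b : V → ℕ}
    {M : Set (Sym2 V)} (hM : IsMaxBMatching G b M) {c d : FlexComp G b}
    (h : StepRel G b A B c d) :
    c = d ∨ ∃ u ∈ c.supp, ∃ v ∈ d.supp, Arc G A B M u v ∧ ¬ IsFlexibleEdge G b s(u, v) := by
  rcases h with h | ⟨u, hu, v, hv, h⟩ | ⟨u, hu, v, hv, h⟩
  · exact Or.inl h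
  · refine Or.inr ⟨u, hu.1, v, hv.1, ⟨h.1, Or.inl ⟨hu.2, h.2 M hM⟩⟩, ?_⟩
    rintro ⟨-, N, hN, h'⟩
    exact h' (h.2 N hN)
  · rw [Sym2.eq_swap] at h
    refine Or.inr ⟨v, hv.1, u, hu.1, ⟨h.1, Or.inr ⟨hv.2, h.2 M hM⟩⟩, ?_⟩
    rintro ⟨⟨N, hN, h'⟩, -⟩
    exact h.2 N hN h'

lemma reach_gen (G : SimpleGraph V) (A B : Set V) (hG : Bipartition G A B) (b : V → ℕ)
    (M : Set (Sym2 V)) (hM : IsMaxBMatching G b M) (c d : FlexComp G b)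
    (hc : ConsistentComp G b c) (h : Relation.ReflTransGen (ConsStepRel G b A B) c d) :
    ∀ x ∈ c.supp, ∀ y ∈ d.supp, Relation.ReflTransGen (Arc G A B M) x y := by
  induction h with
  | refl => exact fun x hx y hy => reach_in G A B hG b M hM c hc x y hx hy
  | tail _ hpq ih =>
    intro x hx y hy
    obtain ⟨_, h2, h3⟩ := hpq
    rcases step_arc hM h3 with rfl | ⟨u, hu, v, hv, h, -⟩
    · exact ih x hx y hy
    · exact ((ih x hx u hu).tail h).trans (reach_in G A B hG b M hM _ h2 v y hv hy)

lemma step_back (G : SimpleGraph V) (A B : Set V) (hG : Bipartition G A B) (b : V → ℕ)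
    (c d : FlexComp G b) (h : ConsStepRel G b A B c d)
    (h' : Relation.ReflTransGen (ConsStepRel G b A B) d c) : c = d := by
  obtain ⟨M, hM⟩ := exists_max G b
  rcases step_arc hM h.2.2 with h1 | ⟨u, hu, v, hv, ha, hf⟩
  · exact h1
  · exfalso
    obtain ⟨M', hM', hd⟩ := flip_arc G A B hG b M hM u v ha
      (reach_gen G A B hG b M hM d c h.2.1 h' v hv u hu)
    apply hf
    by_cases hm : s(u, v) ∈ M
    · exact ⟨⟨M, hM, hm⟩, ⟨M', hM', by tauto⟩⟩
    · exact ⟨⟨M', hM', by tauto⟩, ⟨M, hM, hm⟩⟩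

end BM

/-- The relation `⪯_A`, defined on `b`-consistent flexible components as chains of one-step
relations `⊴_A` through `b`-consistent flexible components, is reflexive, transitive, and
antisymmetric. -/
theorem stmt_13 (G : SimpleGraph V) (A B : Set V) (hG : Bipartition G A B) (b : V → ℕ) :
    (∀ c : FlexComp G b, ConsistentComp G b c →
      Relation.ReflTransGen (ConsStepRel G b A B) c c) ∧
    (∀ c d e : FlexComp G b, Relation.ReflTransGen (ConsStepRel G b A B) c d →
      Relation.ReflTransGen (ConsStepRel G b A B) d e →
      Relation.ReflTransGen (ConsStepRel G b A B) c e) ∧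
    (∀ c d : FlexComp G b, Relation.ReflTransGen (ConsStepRel G b A B) c d →
      Relation.ReflTransGen (ConsStepRel G b A B) d c → c = d) := by
  refine ⟨fun c _ => .refl, fun c d e h1 h2 => h1.trans h2, fun c d h => ?_⟩
  induction h using Relation.ReflTransGen.head_induction_on with
  | refl => exact fun _ => rfl
  | head h1 h2 ih =>
    intro h3
    have := BM.step_back G A B hG b _ _ h1 (h2.trans h3)
    subst this
    exact ih h3
end

section
/- Let G be a finite bipartite graph with color classes A and B, b : V(G) → ℕ, and let C₁ and C₂ be b-consistent flexible components with C₁ ⪯_A C₂, witnessed by b-consistent flexible components D₁, …, D_k (k ≥ 1) with C₁ = D₁, C₂ = D_k and D₁ ⊴_A ⋯ ⊴_A D_k. Write A_i := V(C_i) ∩ A and B_i := V(C_i) ∩ B for i = 1, 2. Then for every maximum b-matching M of G: (i) for every x ∈ A₁ and y ∈ A₂ there is an M-wedge path from x to y; (ii) for every x ∈ A₁ and y ∈ B₂ there is an M-saturated path between x and y; (iii) for every x ∈ A₂ and y ∈ B₁ there is an M-exposed path between x and y; (iv) for every x ∈ B₁ and y ∈ B₂ there is an M-wedge path from y to x. Moreover,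 these paths can be chosen with all their vertices contained in V(D₁) ∪ ⋯ ∪ V(D_k). -/
open scoped symmDiff

variable {V : Type} [Fintype V]

open Relation in
theorem balanced_reach (H : V → V → Prop) (v : V)
    (hbal : ∀ u, ReflTransGen H v u → {w | H u w}.ncard = {w | H w u}.ncard)
    (u : V) (huv : H u v) : ReflTransGen H v u := by
  classical
  by_contra hu
  set R : Finset V := Finset.univ.filter (fun u => ReflTransGen H v u) with hR
  have hmem : ∀ x, x ∈ R ↔ ReflTransGen H v x := by intro x; simp [hR]
  have hout : ∀ x ∈ R, ∀ w, w ∉ R → ¬ H x w := by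
    intro x hx w hw h
    exact hw ((hmem w).2 (((hmem x).1 hx).tail h))
  have e1 : ∀ x, {w | H x w}.ncard = ∑ w, if H x w then 1 else 0 := by
    intro x
    rw [Set.ncard_eq_toFinset_card']
    simp
  have e2 : ∀ x, {w | H w x}.ncard = ∑ w, if H w x then 1 else 0 := by
    intro x
    rw [Set.ncard_eq_toFinset_card']
    simp
  have h1 : ∑ x ∈ R, ∑ w, (if H x w then 1 else 0) = ∑ x ∈ R, ∑ w, (if H w x then 1 else 0) := by
    apply Finset.sum_congr rfl
    intro x hx
    rw [← e1, ← e2]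
    exact hbal x ((hmem x).1 hx)
  have h2 : ∑ x ∈ R, ∑ w, (if H x w then 1 else 0) = ∑ x ∈ R, ∑ w ∈ R, (if H x w then 1 else 0) := by
    apply Finset.sum_congr rfl
    intro x hx
    symm
    apply Finset.sum_subset (Finset.subset_univ _)
    intro w _ hw
    rw [if_neg (hout x hx w hw)]
  have h3 : ∑ x ∈ R, ∑ w ∈ R, (if H x w then 1 else 0)
      < ∑ x ∈ R, ∑ w, (if H w x then 1 else 0) := by
    rw [Finset.sum_comm]
    apply Finset.sum_lt_sum
    · intro x hx
      exact Finset.sum_le_sum_of_subset (Finset.subset_univ _)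
    · refine ⟨v, (hmem v).2 .refl, ?_⟩
      apply Finset.sum_lt_sum_of_subset (Finset.subset_univ _) (Finset.mem_univ u)
        (fun h => hu ((hmem u).1 h))
      · rw [if_pos huv]; exact one_pos
      · intros; exact Nat.zero_le _
  omega

theorem ncard_inc (M : Set (Sym2 V)) (v : V) :
    {e ∈ M | v ∈ e}.ncard = {w | s(v, w) ∈ M}.ncard := by
  have : {e ∈ M | v ∈ e} = (fun w => s(v, w)) '' {w | s(v, w) ∈ M} := by
    ext e
    constructor
    · rintro ⟨he, hv⟩
      obtain ⟨w, rfl⟩ := hv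
      exact ⟨w, he, rfl⟩
    · rintro ⟨w, hw, rfl⟩
      exact ⟨hw, by simp⟩
  rw [this, Set.ncard_image_of_injective]
  intro a c h
  exact Sym2.congr_right.1 h

/-- arcs of the digraph associated with `M`: `M`-edges go from `A` to `B`, others back. -/
def Arc (G : SimpleGraph V) (A B : Set V) (M : Set (Sym2 V)) (u w : V) : Prop :=
  G.Adj u w ∧ ((u ∈ A ∧ w ∈ B ∧ s(u, w) ∈ M) ∨ (u ∈ B ∧ w ∈ A ∧ s(u, w) ∉ M))

/-- reachability inside `S`. -/
def Reach (G : SimpleGraph V) (A B : Set V) (M : Set (Sym2 V)) (S : Set V) : V → V → Prop :=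
  Relation.ReflTransGen (fun u w => Arc G A B M u w ∧ u ∈ S ∧ w ∈ S)

theorem arc_back (G : SimpleGraph V) (A B : Set V) (hG : Bipartition G A B) (b : V → ℕ)
    (M : Set (Sym2 V)) (hM : IsMaxBMatching G b M) (C : FlexComp G b)
    (hC : ConsistentComp G b C) (u w : V) (hw : w ∈ C.supp)
    (hf : (flexGraph G b).Adj u w) (ha : Arc G A B M u w) :
    Reach G A B M C.supp w u := by
  have hAB : ∀ x, x ∈ A → x ∈ B → False := fun x h1 h2 =>
    Set.disjoint_left.1 hG.disjoint h1 h2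
  have hD : ∀ x ∈ C.supp, ∀ N, IsMaxBMatching G b N → {z | s(x, z) ∈ N}.ncard = b x := by
    intro x hx N hN
    rw [← ncard_inc]
    refine le_antisymm (hN.1.2 x) ?_
    by_contra h
    exact hC (Or.inl ⟨x, hx, N, hN, not_le.1 h⟩)
  have hN : ∃ N, IsMaxBMatching G b N ∧ ((u ∈ A ∧ w ∈ B ∧ s(u, w) ∈ M ∧ s(u,w) ∉ N) ∨
      (u ∈ B ∧ w ∈ A ∧ s(u, w) ∈ N ∧ s(u,w) ∉ M)) := by
    obtain ⟨⟨N1, h1, h1'⟩, ⟨N2, h2, h2'⟩⟩ := hf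
    rcases ha.2 with ⟨p, q, r⟩ | ⟨p, q, r⟩
    · exact ⟨N2, h2, Or.inl ⟨p, q, r, h2'⟩⟩
    · exact ⟨N1, h1, Or.inr ⟨p, q, h1', r⟩⟩
  obtain ⟨N, hN, hH⟩ := hN
  let H : V → V → Prop := fun u w => (u ∈ A ∧ w ∈ B ∧ s(u, w) ∈ M ∧ s(u,w) ∉ N) ∨
      (u ∈ B ∧ w ∈ A ∧ s(u, w) ∈ N ∧ s(u,w) ∉ M)
  have hHf : ∀ x z, H x z → (flexGraph G b).Adj x z ∧ Arc G A B M x z := by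
    rintro x z (⟨p, q, r, s⟩ | ⟨p, q, r, s⟩)
    · exact ⟨⟨⟨M, hM, r⟩, ⟨N, hN, s⟩⟩, hM.1.1 r, Or.inl ⟨p, q, r⟩⟩
    · exact ⟨⟨⟨N, hN, r⟩, ⟨M, hM, s⟩⟩, hN.1.1 r, Or.inr ⟨p, q, s⟩⟩
  have hstay : ∀ x z, x ∈ C.supp → (flexGraph G b).Adj x z → z ∈ C.supp := by
    intro x z hx h
    exact (C.mem_supp_congr_adj h).1 hx
  have hR : ∀ x, Relation.ReflTransGen H w x → x ∈ C.supp ∧ Reach G A B M C.supp w x := by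
    intro x hx
    induction hx with
    | refl => exact ⟨hw, .refl⟩
    | tail _ h ih =>
      have := hHf _ _ h
      have h2 := hstay _ _ ih.1 this.1
      exact ⟨h2, ih.2.tail ⟨this.2, ih.1, h2⟩⟩
  refine (hR u (balanced_reach H w ?_ u hH)).2
  intro x hx
  have hxC := (hR x hx).1
  have hM1 := hD x hxC M hM
  have hN1 := hD x hxC N hN
  have key : ({z | s(x, z) ∈ M} \ {z | s(x, z) ∈ N}).ncard
      = ({z | s(x, z) ∈ N} \ {z | s(x, z) ∈ M}).ncard := by
    have a1 := Set.ncard_inter_add_ncard_sdiff_eq_ncard {z | s(x, z) ∈ M} {z | s(x, z) ∈ N}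
    have a2 := Set.ncard_inter_add_ncard_sdiff_eq_ncard {z | s(x, z) ∈ N} {z | s(x, z) ∈ M}
    rw [Set.inter_comm] at a2
    omega
  have hadjM : ∀ z, s(x, z) ∈ M → G.Adj x z := fun z h => hM.1.1 h
  have hadjN : ∀ z, s(x, z) ∈ N → G.Adj x z := fun z h => hN.1.1 h
  have hbt : ∀ z, G.Adj x z → (x ∈ A ∧ z ∈ B) ∨ (x ∈ B ∧ z ∈ A) := fun z h => hG.between h
  have hx : x ∈ A ∨ x ∈ B := by
    have : x ∈ A ∪ B := by rw [hG.cover]; trivial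
    exact this
  rcases hx with hx | hx
  · have e1 : {z | H x z} = {z | s(x, z) ∈ M} \ {z | s(x, z) ∈ N} := by
      ext z
      have := hAB x hx
      have := hbt z
      have := hadjM z
      simp only [H, Set.mem_setOf_eq, Set.mem_diff]
      tauto
    have e2 : {z | H z x} = {z | s(x, z) ∈ N} \ {z | s(x, z) ∈ M} := by
      ext z
      have := hAB x hx
      have := hbt z
      have := hadjN z
      simp only [H, Set.mem_setOf_eq, Set.mem_diff, Sym2.eq_swap (a := z) (b := x)]
      tauto
    rw [e1, e2, key]
  · have e1 : {z | H x z} = {z | s(x, z) ∈ N} \ {z | s(x, z) ∈ M} := by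
      ext z
      have := fun h => hAB x h hx
      have := hbt z
      have := hadjN z
      simp only [H, Set.mem_setOf_eq, Set.mem_diff]
      tauto
    have e2 : {z | H z x} = {z | s(x, z) ∈ M} \ {z | s(x, z) ∈ N} := by
      ext z
      have := fun h => hAB x h hx
      have := hbt z
      have := hadjM z
      simp only [H, Set.mem_setOf_eq, Set.mem_diff, Sym2.eq_swap (a := z) (b := x)]
      tauto
    rw [e1, e2, key]

theorem flex_adj (G : SimpleGraph V) (b : V → ℕ) {u w : V} (h : (flexGraph G b).Adj u w) :
    G.Adj u w := by
  obtain ⟨⟨N, hN, h⟩, -⟩ := h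
  exact hN.1.1 h

theorem comp_reach (G : SimpleGraph V) (A B : Set V) (hG : Bipartition G A B) (b : V → ℕ)
    (M : Set (Sym2 V)) (hM : IsMaxBMatching G b M) (C : FlexComp G b)
    (hC : ConsistentComp G b C) (u w : V) (hu : u ∈ C.supp) (hw : w ∈ C.supp) :
    Reach G A B M C.supp u w := by
  have hr : (flexGraph G b).Reachable u w := by
    rw [SimpleGraph.ConnectedComponent.mem_supp_iff] at hu hw
    exact SimpleGraph.ConnectedComponent.exact (hu.trans hw.symm)
  obtain ⟨p⟩ := hr
  induction p with
  | nil => exact .refl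
  | @cons u v w h p ih =>
    have hv : v ∈ C.supp := (C.mem_supp_congr_adj h).1 hu
    refine Relation.ReflTransGen.trans ?_ (ih hv hw)
    by_cases ha : Arc G A B M u v
    · exact .single ⟨ha, hu, hv⟩
    · have ha' : Arc G A B M v u := by
        have hadj := flex_adj G b h
        refine ⟨hadj.symm, ?_⟩
        rw [Sym2.eq_swap]
        have := hG.between hadj
        unfold Arc at ha
        tauto
      exact arc_back G A B hG b M hM C hC v u hu h.symm ha'

theorem Reach.mono {G : SimpleGraph V} {A B : Set V} {M : Set (Sym2 V)} {S T : Set V}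
    (hST : S ⊆ T) {u w : V} (h : Reach G A B M S u w) : Reach G A B M T u w :=
  Relation.ReflTransGen.mono (fun _ _ h => ⟨h.1, hST h.2.1, hST h.2.2⟩) _ _ h

theorem reach_walk (G : SimpleGraph V) (A B : Set V) (M : Set (Sym2 V)) (S : Set V) (u w : V)
    (hu : u ∈ S) (h : Reach G A B M S u w) :
    ∃ p : G.Walk u w, p.IsPath ∧ (∀ d ∈ p.darts, Arc G A B M d.fst d.snd) ∧
      ∀ x ∈ p.support, x ∈ S := by
  classical
  have : ∃ p : G.Walk u w, (∀ d ∈ p.darts, Arc G A B M d.fst d.snd) ∧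
      ∀ x ∈ p.support, x ∈ S := by
    induction h with
    | refl => exact ⟨.nil, by simp, by simpa using hu⟩
    | tail _ h ih =>
      obtain ⟨p, h1, h2⟩ := ih
      refine ⟨p.concat h.1.1, ?_, ?_⟩
      · intro d hd
        rw [SimpleGraph.Walk.darts_concat, List.concat_eq_append, List.mem_append,
          List.mem_singleton] at hd
        rcases hd with hd | rfl
        · exact h1 d hd
        · exact h.1
      · intro x hx
        rw [SimpleGraph.Walk.support_concat, List.mem_append,
          List.mem_singleton] at hx
        rcases hx with hx | rfl
        · exact h2 x hx
        · exact h.2.2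
  obtain ⟨p, h1, h2⟩ := this
  exact ⟨p.bypass, p.bypass_isPath, fun d hd => h1 d (p.darts_bypass_subset_darts hd),
    fun x hx => h2 x (p.support_bypass_subset_support hx)⟩

theorem edgeDeg_cons_pos (e : Sym2 V) (l : List (Sym2 V)) (M : Set (Sym2 V)) (v : V)
    (hl : ∀ f ∈ l, v ∈ f → f ∈ M → False) (hv : v ∈ e) (he : e ∈ M) :
    edgeDeg (e :: l) M v = 1 := by
  unfold edgeDeg
  rw [Set.ncard_eq_one]
  refine ⟨e, ?_⟩
  ext f
  simp only [List.mem_cons, Set.mem_setOf_eq, Set.mem_singleton_iff]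
  constructor
  · rintro ⟨rfl | h, h2, h3⟩
    · rfl
    · exact (hl f h h2 h3).elim
  · rintro rfl
    exact ⟨Or.inl rfl, hv, he⟩

theorem edgeDeg_cons_neg (e : Sym2 V) (l : List (Sym2 V)) (M : Set (Sym2 V)) (v : V)
    (h : ¬ (v ∈ e ∧ e ∈ M)) :
    edgeDeg (e :: l) M v = edgeDeg l M v := by
  unfold edgeDeg
  congr 1
  ext f
  simp only [List.mem_cons, Set.mem_setOf_eq]
  constructor
  · rintro ⟨rfl | h1, h2, h3⟩
    · exact (h ⟨h2, h3⟩).elim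
    · exact ⟨h1, h2, h3⟩
  · rintro ⟨h1, h2⟩
    exact ⟨Or.inr h1, h2⟩

theorem edgeDeg_zero (l : List (Sym2 V)) (M : Set (Sym2 V)) (v : V) :
    edgeDeg l M v = 0 ↔ ∀ f ∈ l, v ∈ f → f ∈ M → False := by
  unfold edgeDeg
  rw [Set.ncard_eq_zero, Set.eq_empty_iff_forall_notMem]
  exact ⟨fun h f h1 h2 h3 => h f ⟨h1, h2, h3⟩, fun h f hf => h f hf.1 hf.2.1 hf.2.2⟩

theorem deg_lemma (G : SimpleGraph V) (A B : Set V) (hAB : Disjoint A B) (M : Set (Sym2 V))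
    {x y : V} (p : G.Walk x y) (hp : p.IsPath) (hd : ∀ d ∈ p.darts, Arc G A B M d.fst d.snd) :
    ∀ v ∈ p.support, (v ∈ A → v ≠ y → edgeDeg p.edges M v = 1) ∧
      (v ∈ A → v = y → edgeDeg p.edges M v = 0) ∧
      (v ∈ B → v ≠ x → edgeDeg p.edges M v = 1) ∧
      (v ∈ B → v = x → edgeDeg p.edges M v = 0) := by
  have hAB : ∀ x, x ∈ A → x ∈ B → False := fun x h1 h2 => Set.disjoint_left.1 hAB h1 h2
  induction p with
  | nil =>
    intro v hv
    simp only [SimpleGraph.Walk.support_nil, List.mem_singleton] at hv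
    subst hv
    simp [edgeDeg]
  | @cons x z y h q ih =>
    rw [SimpleGraph.Walk.cons_isPath_iff] at hp
    have ha : Arc G A B M x z := hd ⟨(x, z), h⟩ (by simp)
    have ih := ih hp.1 (fun d hd' => hd d (by simp [hd']))
    have hy : y ∈ q.support := q.end_mem_support
    have hz : z ∈ q.support := q.start_mem_support
    have hxq : ∀ f ∈ q.edges, x ∈ f → f ∈ M → False := by
      intro f hf hxf _
      exact hp.2 (q.mem_support_of_mem_edges hf hxf)
    intro v hv
    rw [SimpleGraph.Walk.edges_cons]
    rw [SimpleGraph.Walk.support_cons, List.mem_cons] at hv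
    rcases hv with rfl | hv
    · have hvy : v ≠ y := by rintro rfl; exact hp.2 hy
      refine ⟨fun hvA _ => ?_, fun _ h => (hvy h).elim, fun _ h => (h rfl).elim, fun hvB _ => ?_⟩
      · apply edgeDeg_cons_pos _ _ _ _ hxq (by simp)
        rcases ha.2 with h | h
        · exact h.2.2
        · exact (hAB _ hvA h.1).elim
      · rw [edgeDeg_cons_neg, edgeDeg_zero]
        · exact hxq
        · rintro ⟨-, hm⟩
          rcases ha.2 with h | h
          · exact hAB _ h.1 hvB
          · exact h.2.2 hm
    · have hvx : v ≠ x := by rintro rfl; exact hp.2 hv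
      obtain ⟨i1, i2, i3, i4⟩ := ih v hv
      have hAneg : v ∈ A → ¬ (v ∈ s(x, z) ∧ s(x, z) ∈ M) := by
        rintro hvA ⟨hm, hm'⟩
        simp only [Sym2.mem_iff] at hm
        rcases hm with hm | rfl
        · exact hvx hm
        rcases ha.2 with h | h
        · exact hAB _ hvA h.2.1
        · exact h.2.2 hm'
      refine ⟨fun hvA h => ?_, fun hvA h => ?_, fun hvB _ => ?_, fun _ h => (hvx h).elim⟩
      · rw [edgeDeg_cons_neg _ _ _ _ (hAneg hvA)]; exact i1 hvA h
      · rw [edgeDeg_cons_neg _ _ _ _ (hAneg hvA)]; exact i2 hvA h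
      · by_cases hvz : v = z
        · have i4 := i4 hvB hvz
          rw [edgeDeg_zero] at i4
          apply edgeDeg_cons_pos _ _ _ _ i4 (by simp [hvz])
          rcases ha.2 with h | h
          · exact h.2.2
          · exact (hAB _ (hvz ▸ h.2.1) hvB).elim
        · rw [edgeDeg_cons_neg]
          · exact i3 hvB hvz
          · rintro ⟨hm, -⟩
            simp only [Sym2.mem_iff] at hm
            tauto

theorem arc_compl {G : SimpleGraph V} {A B : Set V} {M : Set (Sym2 V)} {u w : V}
    (h : Arc G A B M u w) : Arc G B A Mᶜ u w := by
  refine ⟨h.1, ?_⟩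
  have := h.2
  simp only [Set.mem_compl_iff]
  tauto

theorem edgeDeg_reverse {G : SimpleGraph V} {x y : V} (p : G.Walk x y) (M : Set (Sym2 V)) (v : V) :
    edgeDeg p.reverse.edges M v = edgeDeg p.edges M v := by
  unfold edgeDeg
  simp [SimpleGraph.Walk.edges_reverse]

theorem chain_reach (G : SimpleGraph V) (A B : Set V) (hG : Bipartition G A B) (b : V → ℕ)
    (k : ℕ) (D : Fin (k + 1) → FlexComp G b)
    (hcons : ∀ i, ConsistentComp G b (D i))
    (hchain : ∀ i : Fin k, StepRel G b A B (D i.castSucc) (D i.succ))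
    (M : Set (Sym2 V)) (hM : IsMaxBMatching G b M) (j : Fin (k + 1)) :
    ∀ x ∈ (D 0).supp, ∀ y ∈ (D j).supp, Reach G A B M (⋃ i, (D i).supp) x y := by
  have hin : ∀ i (x y : V), x ∈ (D i).supp → y ∈ (D i).supp →
      Reach G A B M (⋃ i, (D i).supp) x y := fun i x y hx hy =>
    (comp_reach G A B hG b M hM (D i) (hcons i) x y hx hy).mono
      (Set.subset_iUnion (fun i => (D i).supp) i)
  have hmem : ∀ i x, x ∈ (D i).supp → x ∈ ⋃ i, (D i).supp := fun i x hx =>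
    Set.mem_iUnion.2 ⟨i, hx⟩
  induction j using Fin.induction with
  | zero => intro x hx y hy; exact hin 0 x y hx hy
  | succ i ih =>
    intro x hx y hy
    rcases hchain i with h | ⟨u, hu, v, hv, h⟩ | ⟨u, hu, v, hv, h⟩
    · exact ih x hx y (h ▸ hy)
    · refine ((ih x hx u hu.1).tail ⟨⟨h.1, Or.inl ⟨hu.2, hv.2, h.2 M hM⟩⟩, hmem _ _ hu.1,
        hmem _ _ hv.1⟩).trans (hin _ v y hv.1 hy)
    · refine ((ih x hx v hv.1).tail ⟨⟨G.adj_symm h.1, Or.inr ⟨hv.2, hu.2, ?_⟩⟩, hmem _ _ hv.1,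
        hmem _ _ hu.1⟩).trans (hin _ u y hu.1 hy)
      rw [Sym2.eq_swap]; exact h.2 M hM

/-- Let `C₁ ⪯_A C₂` be witnessed by a chain `D₀ ⊴_A ⋯ ⊴_A D_k` of `b`-consistent flexible
components. Then for every maximum `b`-matching `M`: wedge/saturated/exposed/wedge paths
exist as stated, and they may be chosen with all vertices in `V(D₀) ∪ ⋯ ∪ V(D_k)`. -/
theorem stmt_14 (G : SimpleGraph V) (A B : Set V) (hG : Bipartition G A B) (b : V → ℕ)
    (k : ℕ) (D : Fin (k + 1) → FlexComp G b)
    (hcons : ∀ i, ConsistentComp G b (D i))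
    (hchain : ∀ i : Fin k, StepRel G b A B (D i.castSucc) (D i.succ))
    (C₁ C₂ : FlexComp G b) (hD1 : D 0 = C₁) (hDk : D (Fin.last k) = C₂)
    (M : Set (Sym2 V)) (hM : IsMaxBMatching G b M) :
    (∀ x ∈ C₁.supp ∩ A, ∀ y ∈ C₂.supp ∩ A, ∃ p : G.Walk x y,
      IsWedgePath M p ∧ ∀ w ∈ p.support, w ∈ ⋃ i, (D i).supp) ∧
    (∀ x ∈ C₁.supp ∩ A, ∀ y ∈ C₂.supp ∩ B, ∃ p : G.Walk x y,
      IsSaturatedPath M p ∧ ∀ w ∈ p.support, w ∈ ⋃ i, (D i).supp) ∧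
    (∀ x ∈ C₂.supp ∩ A, ∀ y ∈ C₁.supp ∩ B, ∃ p : G.Walk x y,
      IsExposedPath M p ∧ ∀ w ∈ p.support, w ∈ ⋃ i, (D i).supp) ∧
    (∀ x ∈ C₁.supp ∩ B, ∀ y ∈ C₂.supp ∩ B, ∃ p : G.Walk y x,
      IsWedgePath M p ∧ ∀ w ∈ p.support, w ∈ ⋃ i, (D i).supp) := by
  have hcov : ∀ x, x ∈ A ∨ x ∈ B := by
    intro x
    have : x ∈ A ∪ B := by rw [hG.cover]; trivial
    exact this
  have hAB : ∀ x, x ∈ A → x ∈ B → False := fun x h1 h2 =>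
    Set.disjoint_left.1 hG.disjoint h1 h2
  have main : ∀ x ∈ C₁.supp, ∀ y ∈ C₂.supp, ∃ p : G.Walk x y, p.IsPath ∧
      (∀ d ∈ p.darts, Arc G A B M d.fst d.snd) ∧ ∀ w ∈ p.support, w ∈ ⋃ i, (D i).supp := by
    intro x hx y hy
    subst hD1 hDk
    exact reach_walk G A B M _ x y (Set.mem_iUnion.2 ⟨0, hx⟩)
      (chain_reach G A B hG b k D hcons hchain M hM (Fin.last k) x hx y hy)
  refine ⟨?_, ?_, ?_, ?_⟩
  · intro x hx y hy
    obtain ⟨p, hp, hd, hs⟩ := main x hx.1 y hy.1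
    have hdeg := deg_lemma G A B hG.disjoint M p hp hd
    refine ⟨p, ⟨hp, fun v hv hvy => ?_, (hdeg y p.end_mem_support).2.1 hy.2 rfl⟩, hs⟩
    rcases hcov v with h | h
    · exact (hdeg v hv).1 h hvy
    · exact (hdeg v hv).2.2.1 h (by rintro rfl; exact hAB _ hx.2 h)
  · intro x hx y hy
    obtain ⟨p, hp, hd, hs⟩ := main x hx.1 y hy.1
    have hdeg := deg_lemma G A B hG.disjoint M p hp hd
    refine ⟨p, ⟨hp, fun v hv => ?_⟩, hs⟩
    rcases hcov v with h | h
    · exact (hdeg v hv).1 h (by rintro rfl; exact hAB _ h hy.2)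
    · exact (hdeg v hv).2.2.1 h (by rintro rfl; exact hAB _ hx.2 h)
  · intro y hy x hx
    obtain ⟨p, hp, hd, hs⟩ := main x hx.1 y hy.1
    have hdeg := deg_lemma G B A hG.disjoint.symm Mᶜ p hp (fun d h => arc_compl (hd d h))
    refine ⟨p.reverse, ⟨hp.reverse, fun v hv => ?_⟩, fun w hw => hs w (by simpa using hw)⟩
    have hv : v ∈ p.support := by simpa using hv
    rw [edgeDeg_reverse]
    rcases hcov v with h | h
    · exact (hdeg v hv).2.2.1 h (by rintro rfl; exact hAB _ h hx.2)
    · exact (hdeg v hv).1 h (by rintro rfl; exact hAB _ hy.2 h)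
  · intro x hx y hy
    obtain ⟨p, hp, hd, hs⟩ := main x hx.1 y hy.1
    have hdeg := deg_lemma G A B hG.disjoint M p hp hd
    refine ⟨p.reverse, ⟨hp.reverse, fun v hv hvx => ?_, ?_⟩, fun w hw => hs w (by simpa using hw)⟩
    · have hv : v ∈ p.support := by simpa using hv
      rw [edgeDeg_reverse]
      rcases hcov v with h | h
      · exact (hdeg v hv).1 h (by rintro rfl; exact hAB _ h hy.2)
      · exact (hdeg v hv).2.2.1 h hvx
    · rw [edgeDeg_reverse]
      exact (hdeg x p.start_mem_support).2.2.2 hx.2 rfl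
end

section
/- Let G be a finite bipartite graph with color classes A and B, and b : V(G) → ℕ. The binary relation ⪯_A is a partial order (reflexive, transitive, and antisymmetric) over the set of all b-flexible components of G. -/
open scoped symmDiff

variable {V : Type} [Fintype V]

namespace BFlex
open Classical Filter Topology

/-- incidence -/
noncomputable def inc (v : V) (e : Sym2 V) : ℝ := if v ∈ e then 1 else 0

/-- fractional degree -/
noncomputable def deg (x : Sym2 V → ℝ) (v : V) : ℝ := ∑ e, inc v e * x e

/-- fractional b-matching polytope -/
def Poly (G : SimpleGraph V) (b : V → ℕ) : Set (Sym2 V → ℝ) :=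
  {x | (∀ e, 0 ≤ x e ∧ x e ≤ 1) ∧ (∀ e, e ∉ G.edgeSet → x e = 0) ∧ ∀ v, deg x v ≤ b v}

/-- sign of a vertex -/
noncomputable def sg (A : Set V) (v : V) : ℝ := if v ∈ A then -1 else 1

lemma sum_inc {a c : V} (h : a ≠ c) (f : V → ℝ) :
    ∑ v, f v * inc v s(a, c) = f a + f c := by
  have : ∀ v, f v * inc v s(a, c) = (if v = a then f v else 0) + (if v = c then f v else 0) := by
    intro v
    unfold inc
    by_cases h1 : v = a
    · subst h1; simp [h]
    · by_cases h2 : v = c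
      · subst h2; simp [h1]
      · simp [h1, h2]
  simp only [this, Finset.sum_add_distrib, Finset.sum_ite_eq', Finset.mem_univ, if_true]

lemma edge_form {G : SimpleGraph V} {A B : Set V} (hG : Bipartition G A B) {e : Sym2 V}
    (he : e ∈ G.edgeSet) : ∃ a c, a ∈ A ∧ c ∈ B ∧ c ∉ A ∧ a ≠ c ∧ e = s(a, c) := by
  induction e using Sym2.ind with
  | _ u v =>
    have hadj : G.Adj u v := he
    have hd := Set.disjoint_left.mp hG.disjoint
    rcases hG.between hadj with ⟨h1, h2⟩ | ⟨h1, h2⟩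
    · exact ⟨u, v, h1, h2, fun h => hd h h2, hadj.ne, rfl⟩
    · exact ⟨v, u, h2, h1, fun h => hd h h1, hadj.ne', Sym2.eq_swap⟩

lemma sum_sg_inc {G : SimpleGraph V} {A B : Set V} (hG : Bipartition G A B) {e : Sym2 V}
    (he : e ∈ G.edgeSet) : ∑ v, sg A v * inc v e = 0 := by
  obtain ⟨a, c, ha, hc, hc', hne, rfl⟩ := edge_form hG he
  rw [sum_inc hne]; simp [sg, ha, hc']

lemma sum_one_inc {G : SimpleGraph V} {A B : Set V} (hG : Bipartition G A B) {e : Sym2 V}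
    (he : e ∈ G.edgeSet) : ∑ v, inc v e = 2 := by
  obtain ⟨a, c, ha, hc, hc', hne, rfl⟩ := edge_form hG he
  have := sum_inc hne (fun _ => (1:ℝ))
  simp only [one_mul] at this
  rw [this]; norm_num

lemma deg_add (x y : Sym2 V → ℝ) (v : V) : deg (x + y) v = deg x v + deg y v := by
  simp [deg, mul_add, Finset.sum_add_distrib]

lemma deg_smul (t : ℝ) (y : Sym2 V → ℝ) (v : V) : deg (t • y) v = t * deg y v := by
  simp only [deg, Finset.mul_sum, Pi.smul_apply, smul_eq_mul]
  exact Finset.sum_congr rfl fun e _ => by ring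

lemma deg_single (e : Sym2 V) (t : ℝ) (v : V) : deg (Pi.single e t) v = inc v e * t := by
  unfold deg
  rw [Finset.sum_eq_single e]
  · simp
  · intro f _ hf; simp [hf]
  · simp

/-- sum of all entries via degrees -/
lemma two_sum {G : SimpleGraph V} {A B : Set V} (hG : Bipartition G A B) {y : Sym2 V → ℝ}
    (hy : ∀ e, e ∉ G.edgeSet → y e = 0) : ∑ v, deg y v = 2 * ∑ e, y e := by
  unfold deg
  rw [Finset.sum_comm, Finset.mul_sum]
  refine Finset.sum_congr rfl fun e _ => ?_
  rw [← Finset.sum_mul]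
  by_cases he : e ∈ G.edgeSet
  · rw [sum_one_inc hG he]
  · simp [hy e he]

/-- a fractional point has a nonzero direction preserving tight degrees -/
lemma exists_dir {G : SimpleGraph V} {A B : Set V} (hG : Bipartition G A B) {b : V → ℕ}
    {x : Sym2 V → ℝ} (hx : x ∈ Poly G b) (hfr : ∃ e, 0 < x e ∧ x e < 1) :
    ∃ d : Sym2 V → ℝ, d ≠ 0 ∧ (∀ e, ¬ (0 < x e ∧ x e < 1) → d e = 0) ∧
      ∀ v, deg x v = b v → deg d v = 0 := by
  obtain ⟨hx01, hxE, hxd⟩ := hx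
  let F : Finset (Sym2 V) := Finset.univ.filter fun e => 0 < x e ∧ x e < 1
  let T : Finset V := Finset.univ.filter fun v => deg x v = b v ∧ ∃ e ∈ F, v ∈ e
  have hFE : ∀ e ∈ F, e ∈ G.edgeSet := by
    intro e he
    by_contra h
    have := hxE e h
    simp [F, this] at he
  have hFne : F.Nonempty := by
    obtain ⟨e, he⟩ := hfr
    exact ⟨e, by simpa [F] using he⟩
  -- extension by zero
  let ext : (F → ℝ) →ₗ[ℝ] (Sym2 V → ℝ) :=
    { toFun := fun d e => if h : e ∈ F then d ⟨e, h⟩ else 0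
      map_add' := by intro d d'; ext e; by_cases h : e ∈ F <;> simp [h]
      map_smul' := by intro t d; ext e; by_cases h : e ∈ F <;> simp [h] }
  let L : (F → ℝ) →ₗ[ℝ] (T → ℝ) :=
    { toFun := fun d v => deg (ext d) v
      map_add' := by intro d d'; ext v; simp [deg_add]
      map_smul' := by intro t d; ext v; simp [deg_smul] }
  have hext0 : ∀ d e, e ∉ F → ext d e = 0 := by
    intro d e h; simp [ext, h]
  have hextF : ∀ d (e : F), ext d e = d e := by
    intro d e; simp [ext]
  by_cases hinj : Function.Injective L
  swap
  · rw [← LinearMap.ker_eq_bot] at hinj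
    obtain ⟨d, hd, hd0⟩ := Submodule.exists_mem_ne_zero_of_ne_bot hinj
    refine ⟨ext d, ?_, ?_, ?_⟩
    · intro h
      apply hd0
      ext e
      rw [← hextF d e, h]; rfl
    · intro e he
      exact hext0 d e (by simpa [F] using he)
    · intro v hv
      by_cases hvT : v ∈ T
      · have := congrFun (LinearMap.mem_ker.mp hd) ⟨v, hvT⟩
        exact this
      · have hno : ∀ e ∈ F, v ∉ e := by
          intro e he hve
          exact hvT (by simp only [T, Finset.mem_filter, Finset.mem_univ, true_and]; exact ⟨hv, e, he, hve⟩)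
        unfold deg
        refine Finset.sum_eq_zero fun e _ => ?_
        by_cases he : e ∈ F
        · simp [inc, hno e he]
        · simp [hext0 d e he]
  exfalso
  have hcard : F.card ≤ T.card := by
    have := LinearMap.finrank_le_finrank_of_injective hinj
    simpa using this
  -- every tight touched vertex has at least two fractional edges
  have htwo : ∀ v ∈ T, (2:ℝ) ≤ ∑ e ∈ F, inc v e := by
    intro v hv
    simp only [T, Finset.mem_filter, Finset.mem_univ, true_and] at hv
    obtain ⟨hvt, e0, he0, hve0⟩ := hv
    by_cases h2 : ∃ e1 ∈ F, e1 ≠ e0 ∧ v ∈ e1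
    · obtain ⟨e1, he1, hne, hve1⟩ := h2
      calc (2:ℝ) = ∑ e ∈ ({e0, e1} : Finset (Sym2 V)), inc v e := by
            rw [Finset.sum_pair hne.symm]; simp [inc, hve0, hve1]; norm_num
        _ ≤ _ := by
            refine Finset.sum_le_sum_of_subset_of_nonneg ?_ ?_
            · intro e he
              simp only [Finset.mem_insert, Finset.mem_singleton] at he
              rcases he with rfl | rfl <;> assumption
            · intro e _ _; unfold inc; split_ifs <;> norm_num
    · push Not at h2
      exfalso
      have hsplit : deg x v = x e0 + ∑ e ∈ Finset.univ.erase e0, inc v e * x e := by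
        unfold deg
        rw [← Finset.add_sum_erase _ _ (Finset.mem_univ e0)]
        simp [inc, hve0]
      have hval : ∀ e ∈ Finset.univ.erase e0, inc v e * x e
          = ((if v ∈ e ∧ x e = 1 then (1:ℤ) else 0 : ℤ) : ℝ) := by
        intro e he
        have hne := Finset.ne_of_mem_erase he
        by_cases hve : v ∈ e
        · have hnF : e ∉ F := fun h => h2 e h hne hve
          have : x e = 0 ∨ x e = 1 := by
            simp only [F, Finset.mem_filter, Finset.mem_univ, true_and, not_and, not_lt] at hnF
            have h01 := hx01 e
            rcases h01.1.lt_or_eq with h | h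
            · right; exact le_antisymm h01.2 (hnF h)
            · left; exact h.symm
          rcases this with h | h <;> simp [inc, hve, h]
        · simp [inc, hve]
      rw [Finset.sum_congr rfl hval, ← Int.cast_sum, hvt] at hsplit
      have hF0 : 0 < x e0 ∧ x e0 < 1 := by simpa [F] using he0
      set z : ℤ := ∑ e ∈ Finset.univ.erase e0, (if v ∈ e ∧ x e = 1 then (1:ℤ) else 0) with hz
      have hxe : x e0 = (((b v : ℤ) - z : ℤ) : ℝ) := by push_cast; linarith
      rw [hxe] at hF0
      have h1 : 0 < (b v : ℤ) - z := by exact_mod_cast hF0.1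
      have h2 : (b v : ℤ) - z < 1 := by exact_mod_cast hF0.2
      omega
  have hnn : ∀ v, (0:ℝ) ≤ ∑ e ∈ F, inc v e := fun v =>
    Finset.sum_nonneg fun e _ => by unfold inc; split_ifs <;> norm_num
  have htot : ∑ v, ∑ e ∈ F, inc v e = 2 * (F.card : ℝ) := by
    rw [Finset.sum_comm, Finset.sum_congr rfl (fun e he => sum_one_inc hG (hFE e he))]
    simp [mul_comm]
  have hTs : 2 * (T.card : ℝ) ≤ ∑ v ∈ T, ∑ e ∈ F, inc v e := by
    have := Finset.card_nsmul_le_sum T _ 2 htwo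
    simpa [mul_comm] using this
  have hsplit := Finset.sum_add_sum_compl T (fun v => ∑ e ∈ F, inc v e)
  have hcnn : (0:ℝ) ≤ ∑ v ∈ Tᶜ, ∑ e ∈ F, inc v e := Finset.sum_nonneg fun v _ => hnn v
  have hcardR : (F.card : ℝ) ≤ T.card := by exact_mod_cast hcard
  have hc0 : ∑ v ∈ Tᶜ, ∑ e ∈ F, inc v e = 0 := by linarith
  have hceq : F.card = T.card := by
    have : (F.card : ℝ) = T.card := by linarith
    exact_mod_cast this
  have hvc : ∀ v ∉ T, ∀ e ∈ F, inc v e = 0 := by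
    intro v hv e he
    have h1 := (Finset.sum_eq_zero_iff_of_nonneg (fun v _ => hnn v)).mp hc0 v (by simpa using hv)
    exact (Finset.sum_eq_zero_iff_of_nonneg
      (fun e _ => by unfold inc; split_ifs <;> norm_num)).mp h1 e he
  have hsurj : Function.Surjective L := by
    have hfr : Module.finrank ℝ (F → ℝ) = Module.finrank ℝ (T → ℝ) := by simpa using hceq
    exact (LinearMap.injective_iff_surjective_of_finrank_eq_finrank hfr).mp hinj
  have hTne : T.Nonempty := by
    rw [← Finset.card_pos, ← hceq, Finset.card_pos]; exact hFne
  obtain ⟨v0, hv0⟩ := hTne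
  obtain ⟨d, hd⟩ := hsurj (Pi.single ⟨v0, hv0⟩ 1)
  have hzero : ∑ v, sg A v * deg (ext d) v = 0 := by
    have : ∀ v, sg A v * deg (ext d) v = ∑ e, (sg A v * inc v e) * ext d e := by
      intro v; unfold deg; rw [Finset.mul_sum]
      exact Finset.sum_congr rfl fun e _ => by ring
    simp only [this]
    rw [Finset.sum_comm]
    refine Finset.sum_eq_zero fun e _ => ?_
    rw [← Finset.sum_mul]
    by_cases he : e ∈ F
    · rw [sum_sg_inc hG (hFE e he), zero_mul]
    · rw [hext0 d e he, mul_zero]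
  rw [Finset.sum_eq_single v0] at hzero
  · have h1 : deg (ext d) v0 = 1 := by
      have := congrFun hd ⟨v0, hv0⟩
      simpa [L] using this
    rw [h1] at hzero
    unfold sg at hzero
    split_ifs at hzero <;> norm_num at hzero
  · intro v _ hne
    by_cases hv : v ∈ T
    · have h1 : deg (ext d) v = 0 := by
        have h2 : L d ⟨v, hv⟩ = 0 := by
          rw [hd, Pi.single_eq_of_ne]
          intro h; exact hne (congrArg Subtype.val h)
        exact h2
      rw [h1, mul_zero]
    · have h1 : deg (ext d) v = 0 := by
        unfold deg
        refine Finset.sum_eq_zero fun e _ => ?_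
        by_cases he : e ∈ F
        · rw [hvc v hv e he, zero_mul]
        · rw [hext0 d e he, mul_zero]
      rw [h1, mul_zero]
  · simp

lemma deg_continuous (v : V) : Continuous fun x : Sym2 V → ℝ => deg x v := by
  unfold deg; fun_prop

lemma poly_compact (G : SimpleGraph V) (b : V → ℕ) : IsCompact (Poly G b) := by
  refine IsCompact.of_isClosed_subset
    (isCompact_univ_pi (fun _ : Sym2 V => isCompact_Icc (a := (0:ℝ)) (b := 1))) ?_ ?_
  · have : Poly G b = (⋂ e, {x | 0 ≤ x e} ∩ {x | x e ≤ 1}) ∩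
        (⋂ e, ⋂ (_ : e ∉ G.edgeSet), {x | x e = 0}) ∩ ⋂ v, {x | deg x v ≤ b v} := by
      ext x; simp [Poly, and_assoc]
    rw [this]
    refine ((isClosed_iInter fun e => ?_).inter
      (isClosed_iInter fun e => isClosed_iInter fun _ => ?_)).inter (isClosed_iInter fun v => ?_)
    · exact (isClosed_le continuous_const (continuous_apply e)).inter
        (isClosed_le (continuous_apply e) continuous_const)
    · exact isClosed_eq (continuous_apply e) continuous_const
    · exact isClosed_le (deg_continuous v) continuous_const
  · intro x hx e _
    exact hx.1 e

/-- moving a little in a feasible direction -/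
lemma eventually_mem {G : SimpleGraph V} {b : V → ℕ} {x d : Sym2 V → ℝ} (hx : x ∈ Poly G b)
    (h0 : ∀ e, d e < 0 → 0 < x e) (h1 : ∀ e, 0 < d e → x e < 1)
    (hE : ∀ e, e ∉ G.edgeSet → d e = 0) (hd : ∀ v, deg x v = b v → deg d v = 0) :
    ∀ᶠ t : ℝ in 𝓝[>] 0, x + t • d ∈ Poly G b := by
  have key : ∀ (p q c : ℝ), p < c → ∀ᶠ t : ℝ in 𝓝[>] 0, p + t * q < c := by
    intro p q c h
    have hc : Continuous fun t : ℝ => p + t * q := by fun_prop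
    have : ∀ᶠ t : ℝ in 𝓝 0, p + t * q < c := by
      refine hc.continuousAt.eventually_lt continuousAt_const ?_
      simpa using h
    exact nhdsWithin_le_nhds this
  have hpos : ∀ᶠ t : ℝ in 𝓝[>] 0, 0 < t := self_mem_nhdsWithin
  have e1 : ∀ᶠ t : ℝ in 𝓝[>] 0, ∀ e, 0 ≤ x e + t * d e := by
    rw [eventually_all]
    intro e
    rcases lt_or_ge (d e) 0 with h | h
    · filter_upwards [key (-x e) (-d e) 0 (by linarith [h0 e h])] with t ht
      linarith
    · filter_upwards [hpos] with t ht
      have := (hx.1 e).1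
      positivity
  have e2 : ∀ᶠ t : ℝ in 𝓝[>] 0, ∀ e, x e + t * d e ≤ 1 := by
    rw [eventually_all]
    intro e
    rcases lt_or_ge 0 (d e) with h | h
    · filter_upwards [key (x e) (d e) 1 (h1 e h)] with t ht
      exact ht.le
    · filter_upwards [hpos] with t ht
      have := (hx.1 e).2
      nlinarith
  have e3 : ∀ᶠ t : ℝ in 𝓝[>] 0, ∀ v, deg x v + t * deg d v ≤ b v := by
    rw [eventually_all]
    intro v
    rcases (hx.2.2 v).lt_or_eq with h | h
    · filter_upwards [key (deg x v) (deg d v) _ h] with t ht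
      exact ht.le
    · filter_upwards with t
      rw [hd v h]; linarith
  filter_upwards [e1, e2, e3] with t a1 a2 a3
  refine ⟨fun e => ⟨by simpa using a1 e, by simpa using a2 e⟩, ?_, ?_⟩
  · intro e he; simp [hx.2.1 e he, hE e he]
  · intro v; rw [deg_add, deg_smul]; exact a3 v

lemma deg_ind (N : Set (Sym2 V)) (v : V) :
    deg (fun e => if e ∈ N then 1 else 0) v = ({e ∈ N | v ∈ e}.ncard : ℝ) := by
  rw [Set.ncard_eq_toFinset_card']
  unfold deg inc
  rw [Set.toFinset_setOf, Finset.card_filter]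
  push_cast
  refine Finset.sum_congr rfl fun e _ => ?_
  by_cases h1 : e ∈ N <;> by_cases h2 : v ∈ e <;> simp [h1, h2]

lemma sum_ind (N : Set (Sym2 V)) :
    ∑ e, (if e ∈ N then (1:ℝ) else 0) = (N.ncard : ℝ) := by
  rw [Set.ncard_eq_toFinset_card', ← Finset.sum_filter]
  simp only [Finset.sum_const, nsmul_eq_mul, mul_one]
  congr 2
  ext; simp

/-- integrality of the bipartite b-matching polytope -/
lemma integrality {G : SimpleGraph V} {A B : Set V} (hG : Bipartition G A B) {b : V → ℕ}
    (w : Sym2 V → ℝ) {x : Sym2 V → ℝ} (hx : x ∈ Poly G b) :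
    ∃ N, IsBMatching G b N ∧ ∑ e, w e * x e ≤ ∑ e, w e * (if e ∈ N then 1 else 0) := by
  let W : StrongDual ℝ (Sym2 V → ℝ) := ∑ e, w e • ContinuousLinearMap.proj (R := ℝ) e
  have hW : ∀ y, W y = ∑ e, w e * y e := by
    intro y; simp [W]
  obtain ⟨m, hm, hmax⟩ := (poly_compact G b).exists_isMaxOn ⟨x, hx⟩ W.continuous.continuousOn
  let S : Set (Sym2 V → ℝ) := {y ∈ Poly G b | ∀ z ∈ Poly G b, W z ≤ W y}
  have hexp : IsExposed ℝ (Poly G b) S := fun _ => ⟨W, rfl⟩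
  have hSc : IsCompact S := hexp.isCompact (poly_compact G b)
  obtain ⟨y, hy⟩ := hSc.extremePoints_nonempty ⟨m, hm, fun z hz => hmax hz⟩
  have hyS : y ∈ S := hy.1
  have hyP := hexp.isExtreme.extremePoints_subset_extremePoints hy
  have hyint : ∀ e, ¬ (0 < y e ∧ y e < 1) := by
    by_contra hcon
    push Not at hcon
    obtain ⟨d, hd0, hdF, hdt⟩ := exists_dir hG hyP.1 hcon
    have hE : ∀ e, e ∉ G.edgeSet → d e = 0 := fun e he =>
      hdF e (by rw [hyP.1.2.1 e he]; simp)
    have f1 : ∀ e, d e ≠ 0 → 0 < y e ∧ y e < 1 := fun e h => by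
      by_contra h'; exact h (hdF e h')
    have a1 := eventually_mem (d := d) hyP.1 (fun e h => (f1 e h.ne).1) (fun e h => (f1 e h.ne').2)
      hE hdt
    have hdegneg : ∀ v, deg (-d) v = - deg d v := by
      intro v; simp [deg]
    have a2 := eventually_mem (d := -d) hyP.1
      (fun e h => (f1 e (by intro h'; simp [h'] at h)).1)
      (fun e h => (f1 e (by intro h'; simp [h'] at h)).2)
      (fun e he => by simp [hE e he]) (fun v hv => by rw [hdegneg, hdt v hv, neg_zero])
    have hpos : ∀ᶠ t : ℝ in 𝓝[>] 0, 0 < t := self_mem_nhdsWithin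
    obtain ⟨t, ⟨h1, h2⟩, ht⟩ := ((a1.and a2).and hpos).exists
    have hseg : y ∈ openSegment ℝ (y + t • d) (y + t • (-d)) := by
      refine ⟨1/2, 1/2, by norm_num, by norm_num, by norm_num, ?_⟩
      ext e; simp; ring
    have := hyP.2 h1 h2 hseg
    have h3 : t • d = 0 := by simpa using this
    rcases smul_eq_zero.mp h3 with h | h
    · exact ht.ne' h
    · exact hd0 h
  have hyind : y = fun e => if e ∈ {e | y e = 1} then 1 else 0 := by
    ext e
    by_cases h : y e = 1
    · simp [h]
    · have h01 := hyP.1.1 e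
      have : y e = 0 := by
        by_contra h0
        exact hyint e ⟨lt_of_le_of_ne h01.1 (Ne.symm h0), lt_of_le_of_ne h01.2 h⟩
      simp [this]
  refine ⟨{e | y e = 1}, ⟨?_, ?_⟩, ?_⟩
  · intro e he
    by_contra h
    have h1 : y e = 1 := he
    rw [hyP.1.2.1 e h] at h1
    norm_num at h1
  · intro v
    have h1 := hyP.1.2.2 v
    rw [hyind, deg_ind] at h1
    exact_mod_cast h1
  · have h1 := hyS.2 x hx
    rw [hW, hW] at h1
    calc _ ≤ _ := h1
      _ = _ := Finset.sum_congr rfl fun e _ => by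
        conv_lhs => rw [hyind]

lemma exists_max (G : SimpleGraph V) (b : V → ℕ) : ∃ M, IsMaxBMatching G b M := by
  obtain ⟨M, hM, hmax⟩ := Set.exists_max_image {M | IsBMatching G b M} Set.ncard
    (Set.toFinite _) ⟨∅, by simp [IsBMatching]⟩
  exact ⟨M, hM, hmax⟩

/-- the average maximum b-matching -/
lemma exists_avg (G : SimpleGraph V) (b : V → ℕ) {M0 : Set (Sym2 V)}
    (hM0 : IsMaxBMatching G b M0) :
    ∃ x ∈ Poly G b, ∑ e, x e = (M0.ncard : ℝ) ∧
      (∀ e, (∀ M, IsMaxBMatching G b M → e ∈ M) → x e = 1) ∧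
      (∀ e, (∀ M, IsMaxBMatching G b M → e ∉ M) → x e = 0) ∧
      (∀ e, (∃ M, IsMaxBMatching G b M ∧ e ∈ M) → 0 < x e) ∧
      (∀ e, (∃ M, IsMaxBMatching G b M ∧ e ∉ M) → x e < 1) := by
  let S : Finset (Set (Sym2 V)) := Finset.univ.filter fun M => IsMaxBMatching G b M
  have hS : ∀ M, M ∈ S ↔ IsMaxBMatching G b M := by intro M; simp [S]
  have hSpos : (0:ℝ) < S.card := by
    exact_mod_cast Finset.card_pos.mpr ⟨M0, (hS M0).mpr hM0⟩
  let i : Set (Sym2 V) → Sym2 V → ℝ := fun M e => if e ∈ M then 1 else 0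
  have hi0 : ∀ M e, 0 ≤ i M e := by intro M e; simp only [i]; split_ifs <;> norm_num
  have hi1 : ∀ M e, i M e ≤ 1 := by intro M e; simp only [i]; split_ifs <;> norm_num
  refine ⟨fun e => (∑ M ∈ S, i M e) / S.card, ⟨?_, ?_, ?_⟩, ?_, ?_, ?_, ?_, ?_⟩
  · intro e
    refine ⟨div_nonneg (Finset.sum_nonneg fun M _ => hi0 M e) hSpos.le, ?_⟩
    rw [div_le_one hSpos]
    calc _ ≤ ∑ M ∈ S, (1:ℝ) := Finset.sum_le_sum fun M _ => hi1 M e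
      _ = _ := by simp
  · intro e he
    beta_reduce
    rw [Finset.sum_eq_zero, zero_div]
    intro M hM
    have : e ∉ M := fun h => he (((hS M).mp hM).1.1 h)
    simp [i, this]
  · intro v
    have : deg (fun e => (∑ M ∈ S, i M e) / S.card) v = (∑ M ∈ S, deg (i M) v) / S.card := by
      unfold deg
      rw [Finset.sum_comm, Finset.sum_div]
      refine Finset.sum_congr rfl fun e _ => ?_
      rw [← Finset.mul_sum, mul_div_assoc]
    rw [this, div_le_iff₀ hSpos]
    calc _ ≤ ∑ M ∈ S, (b v : ℝ) := Finset.sum_le_sum fun M hM => by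
            simp only [i]
            rw [deg_ind]
            exact_mod_cast ((hS M).mp hM).1.2 v
      _ = _ := by simp [mul_comm]
  · rw [← Finset.sum_div, Finset.sum_comm, div_eq_iff hSpos.ne']
    calc _ = ∑ M ∈ S, (M0.ncard : ℝ) := Finset.sum_congr rfl fun M hM => by
            simp only [i]
            rw [sum_ind]
            have hm := (hS M).mp hM
            exact_mod_cast le_antisymm (hM0.2 M hm.1) (hm.2 M0 hM0.1)
      _ = _ := by simp [mul_comm]
  · intro e he
    rw [div_eq_one_iff_eq hSpos.ne']
    calc _ = ∑ M ∈ S, (1:ℝ) := Finset.sum_congr rfl fun M hM => by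
            simp [i, he M ((hS M).mp hM)]
      _ = _ := by simp
  · intro e he
    beta_reduce
    rw [Finset.sum_eq_zero, zero_div]
    intro M hM
    simp [i, he M ((hS M).mp hM)]
  · rintro e ⟨M, hM, heM⟩
    refine div_pos (Finset.sum_pos' (fun M _ => hi0 M e) ⟨M, (hS M).mpr hM, ?_⟩) hSpos
    simp [i, heM]
  · rintro e ⟨M, hM, heM⟩
    rw [div_lt_one hSpos]
    calc _ < ∑ M ∈ S, (1:ℝ) := Finset.sum_lt_sum (fun M _ => hi1 M e)
            ⟨M, (hS M).mpr hM, by simp [i, heM]⟩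
      _ = _ := by simp

/-- directions compatible with the edge classification -/
def Feas (G : SimpleGraph V) (b : V → ℕ) (y : Sym2 V → ℝ) : Prop :=
  (∀ e, e ∉ G.edgeSet → y e = 0) ∧ (∀ e, IsInevitable G b e → y e ≤ 0) ∧
    (∀ e, IsForbidden G b e → 0 ≤ y e)

lemma circ {G : SimpleGraph V} {A B : Set V} (hG : Bipartition G A B) {b : V → ℕ}
    {z : Sym2 V → ℝ} (hz : Feas G b z) (hdeg : ∀ v, deg z v = 0) :
    (∀ e, IsInevitable G b e → z e = 0) ∧ (∀ e, IsForbidden G b e → z e = 0) := by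
  obtain ⟨M0, hM0⟩ := exists_max G b
  obtain ⟨x, hx, hxs, hx1, hx0, hxp, hxl⟩ := exists_avg G b hM0
  have hzs : ∑ e, z e = 0 := by
    have := two_sum hG hz.1
    simp only [hdeg, Finset.sum_const_zero] at this
    linarith
  have hE : ∀ e, z e ≠ 0 → e ∈ G.edgeSet := fun e h => by
    by_contra h'; exact h (hz.1 e h')
  have ev := eventually_mem (d := z) hx
    (fun e h => hxp e (by
      by_contra hc
      push Not at hc
      exact absurd (hz.2.2 e ⟨hE e h.ne, hc⟩) (not_le.mpr h)))
    (fun e h => hxl e (by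
      by_contra hc
      push Not at hc
      exact absurd (hz.2.1 e ⟨hE e h.ne', hc⟩) (not_le.mpr h)))
    hz.1 (fun v _ => hdeg v)
  have hpos : ∀ᶠ t : ℝ in 𝓝[>] 0, 0 < t := self_mem_nhdsWithin
  obtain ⟨t, ht, htp⟩ := (ev.and hpos).exists
  have hsum : ∑ e, (x + t • z) e = (M0.ncard : ℝ) := by
    simp [Finset.sum_add_distrib, ← Finset.mul_sum, hzs, hxs]
  have gen : ∀ (e : Sym2 V) (s : ℝ), ∃ N, IsBMatching G b N ∧
      (M0.ncard : ℝ) + s * (x e + t * z e) ≤ N.ncard + s * (if e ∈ N then 1 else 0) := by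
    intro e s
    obtain ⟨N, hN, hle⟩ := integrality hG (fun f => 1 + (if f = e then s else 0)) ht
    refine ⟨N, hN, ?_⟩
    simp only [add_mul, one_mul, ite_mul, zero_mul, Finset.sum_add_distrib, Finset.sum_ite_eq',
      Finset.mem_univ, if_true] at hle
    rw [hsum, sum_ind] at hle
    simpa using hle
  have ismax : ∀ N, IsBMatching G b N → M0.ncard ≤ N.ncard → IsMaxBMatching G b N :=
    fun N hN h => ⟨hN, fun N' hN' => (hM0.2 N' hN').trans h⟩
  constructor
  · intro e he
    by_contra hne
    have hneg : z e < 0 := lt_of_le_of_ne (hz.2.1 e he) hne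
    obtain ⟨N, hN, hle⟩ := gen e (-1)
    rw [hx1 e he.2] at hle
    have htz : t * z e < 0 := mul_neg_of_pos_of_neg htp hneg
    have hNle : (N.ncard : ℝ) ≤ M0.ncard := by exact_mod_cast hM0.2 N hN
    by_cases heN : e ∈ N
    · simp only [heN, if_true] at hle
      linarith
    · simp only [heN, if_false] at hle
      have h1 : (M0.ncard : ℝ) < N.ncard + 1 := by linarith
      have h2 : M0.ncard < N.ncard + 1 := by exact_mod_cast h1
      exact heN (he.2 N (ismax N hN (by omega)))
  · intro e he
    by_contra hne
    have hp : 0 < z e := lt_of_le_of_ne (hz.2.2 e he) (Ne.symm hne)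
    obtain ⟨N, hN, hle⟩ := gen e 1
    rw [hx0 e he.2] at hle
    have htz : 0 < t * z e := mul_pos htp hp
    have hNle : (N.ncard : ℝ) ≤ M0.ncard := by exact_mod_cast hM0.2 N hN
    by_cases heN : e ∈ N
    · simp only [heN, if_true] at hle
      have h1 : (M0.ncard : ℝ) < N.ncard + 1 := by linarith
      have h2 : M0.ncard < N.ncard + 1 := by exact_mod_cast h1
      exact he.2 N (ismax N hN (by omega)) heN
    · simp only [heN, if_false] at hle
      linarith

/-- there is a feasible unit flow from `p` to `q` -/
def Flow (G : SimpleGraph V) (b : V → ℕ) (A : Set V) (p q : V) : Prop :=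
  ∃ y, Feas G b y ∧ ∀ v, sg A v * deg y v = (if v = p then 1 else 0) - (if v = q then 1 else 0)

lemma Feas.add {G : SimpleGraph V} {b : V → ℕ} {y z : Sym2 V → ℝ} (hy : Feas G b y)
    (hz : Feas G b z) : Feas G b (y + z) :=
  ⟨fun e he => by simp [hy.1 e he, hz.1 e he],
   fun e he => add_nonpos (hy.2.1 e he) (hz.2.1 e he),
   fun e he => add_nonneg (hy.2.2 e he) (hz.2.2 e he)⟩

lemma Flow.refl (G : SimpleGraph V) (b : V → ℕ) (A : Set V) (p : V) : Flow G b A p p :=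
  ⟨0, ⟨fun _ _ => rfl, fun _ _ => le_rfl, fun _ _ => le_rfl⟩, fun v => by simp [deg]⟩

lemma Flow.trans {G : SimpleGraph V} {b : V → ℕ} {A : Set V} {p q r : V}
    (h1 : Flow G b A p q) (h2 : Flow G b A q r) : Flow G b A p r := by
  obtain ⟨y, hy, hy'⟩ := h1
  obtain ⟨z, hz, hz'⟩ := h2
  refine ⟨y + z, hy.add hz, fun v => ?_⟩
  rw [deg_add, mul_add, hy', hz']; ring

lemma div_down {A : Set V} {u v : V} (hu : u ∈ A) (hv : v ∉ A) (t : ℝ) (w : V) :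
    sg A w * deg (Pi.single s(u, v) t) w =
      -t * ((if w = u then 1 else 0) - (if w = v then 1 else 0)) := by
  have huv : u ≠ v := fun h => hv (h ▸ hu)
  rw [deg_single]
  unfold inc sg
  by_cases h1 : w = u
  · subst h1; simp [hu, huv]
  · by_cases h2 : w = v
    · subst h2; simp [hv, h1]
    · simp [h1, h2]

lemma feas_single {G : SimpleGraph V} {b : V → ℕ} {e : Sym2 V} {t : ℝ} (he : e ∈ G.edgeSet)
    (h1 : IsInevitable G b e → t ≤ 0) (h2 : IsForbidden G b e → 0 ≤ t) :
    Feas G b (Pi.single e t) := by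
  refine ⟨fun f hf => ?_, fun f hf => ?_, fun f hf => ?_⟩
  · rw [Pi.single_eq_of_ne]; rintro rfl; exact hf he
  · by_cases h : f = e
    · subst h; simpa using h1 hf
    · simp [h]
  · by_cases h : f = e
    · subst h; simpa using h2 hf
    · simp [h]

/-- along `A → B` using an edge that is not forbidden -/
lemma flow_AB {G : SimpleGraph V} {b : V → ℕ} {A : Set V} {u v : V} (hu : u ∈ A) (hv : v ∉ A)
    (he : s(u, v) ∈ G.edgeSet) (h : ¬ IsForbidden G b s(u, v)) : Flow G b A u v :=
  ⟨Pi.single s(u, v) (-1), feas_single he (fun _ => by norm_num) (fun h' => absurd h' h),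
    fun w => by rw [div_down hu hv]; ring⟩

lemma flow_BA {G : SimpleGraph V} {b : V → ℕ} {A : Set V} {u v : V} (hu : u ∈ A) (hv : v ∉ A)
    (he : s(u, v) ∈ G.edgeSet) (h : ¬ IsInevitable G b s(u, v)) : Flow G b A v u :=
  ⟨Pi.single s(u, v) 1, feas_single he (fun h' => absurd h' h) (fun _ => by norm_num),
    fun w => by rw [div_down hu hv]; ring⟩

lemma sg_ne (A : Set V) (v : V) : sg A v ≠ 0 := by
  unfold sg; split_ifs <;> norm_num

lemma no_inev {G : SimpleGraph V} {A B : Set V} (hG : Bipartition G A B) {b : V → ℕ} {u v : V}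
    (hu : u ∈ A) (hv : v ∉ A) (h : IsInevitable G b s(u, v)) (hf : Flow G b A v u) : False := by
  obtain ⟨y, hy, hy'⟩ := hf
  have hz : Feas G b (y + Pi.single s(u, v) (-1)) := by
    refine hy.add (feas_single h.1 (fun _ => by norm_num) (fun h' => ?_))
    obtain ⟨M, hM⟩ := exists_max G b
    exact absurd (h.2 M hM) (h'.2 M hM)
  have := (circ hG hz (fun w => by
    have : sg A w * deg (y + Pi.single s(u, v) (-1)) w = 0 := by
      rw [deg_add, mul_add, hy', div_down hu hv]; ring
    exact (mul_eq_zero.mp this).resolve_left (sg_ne A w))).1 _ h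
  have h2 := hy.2.1 _ h
  simp at this
  linarith

lemma no_forb {G : SimpleGraph V} {A B : Set V} (hG : Bipartition G A B) {b : V → ℕ} {u v : V}
    (hu : u ∈ A) (hv : v ∉ A) (h : IsForbidden G b s(u, v)) (hf : Flow G b A u v) : False := by
  obtain ⟨y, hy, hy'⟩ := hf
  have hz : Feas G b (y + Pi.single s(u, v) 1) := by
    refine hy.add (feas_single h.1 (fun h' => ?_) (fun _ => by norm_num))
    obtain ⟨M, hM⟩ := exists_max G b
    exact absurd (h'.2 M hM) (h.2 M hM)
  have := (circ hG hz (fun w => by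
    have : sg A w * deg (y + Pi.single s(u, v) 1) w = 0 := by
      rw [deg_add, mul_add, hy', div_down hu hv]; ring
    exact (mul_eq_zero.mp this).resolve_left (sg_ne A w))).2 _ h
  have h2 := hy.2.2 _ h
  simp at this
  linarith

lemma flow_adj {G : SimpleGraph V} {A B : Set V} (hG : Bipartition G A B) {b : V → ℕ} {u v : V}
    (h : (flexGraph G b).Adj u v) : Flow G b A u v := by
  have h' : IsFlexibleEdge G b s(u, v) := h
  obtain ⟨⟨M, hM, heM⟩, ⟨N, hN, heN⟩⟩ := h'
  have he : s(u, v) ∈ G.edgeSet := hM.1.1 heM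
  have hni : ¬ IsInevitable G b s(u, v) := fun h => heN (h.2 N hN)
  have hnf : ¬ IsForbidden G b s(u, v) := fun h => h.2 M hM heM
  have hd := Set.disjoint_left.mp hG.disjoint
  rcases hG.between (show G.Adj u v from he) with ⟨h1, h2⟩ | ⟨h1, h2⟩
  · exact flow_AB h1 (fun h => hd h h2) he hnf
  · rw [Sym2.eq_swap] at he hni
    exact flow_BA h2 (fun h => hd h h1) he hni

lemma flow_comp {G : SimpleGraph V} {A B : Set V} (hG : Bipartition G A B) {b : V → ℕ} {u v : V}
    {c : FlexComp G b} (hu : u ∈ c.supp) (hv : v ∈ c.supp) : Flow G b A u v := by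
  have hr : (flexGraph G b).Reachable u v := by
    rw [SimpleGraph.ConnectedComponent.mem_supp_iff] at hu hv
    exact SimpleGraph.ConnectedComponent.eq.mp (hu.trans hv.symm)
  obtain ⟨p⟩ := hr
  clear hu hv
  induction p with
  | nil => exact Flow.refl G b A _
  | cons h _ ih => exact (flow_adj hG h).trans ih

lemma flow_step {G : SimpleGraph V} {A B : Set V} (hG : Bipartition G A B) {b : V → ℕ}
    {c d : FlexComp G b} (h : StepRel G b A B c d) {p q : V} (hp : p ∈ c.supp) (hq : q ∈ d.supp) :
    Flow G b A p q := by
  have hd := Set.disjoint_left.mp hG.disjoint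
  obtain ⟨M, hM⟩ := exists_max G b
  rcases h with rfl | ⟨u, hu, v, hv, h⟩ | ⟨u, hu, v, hv, h⟩
  · exact flow_comp hG hp hq
  · exact ((flow_comp hG hp hu.1).trans (flow_AB hu.2 (fun h => hd h hv.2) h.1
      (fun h' => h'.2 M hM (h.2 M hM)))).trans (flow_comp hG hv.1 hq)
  · exact ((flow_comp hG hp hv.1).trans (flow_BA hu.2 (fun h => hd h hv.2) h.1
      (fun h' => h.2 M hM (h'.2 M hM)))).trans (flow_comp hG hu.1 hq)

lemma flow_chain {G : SimpleGraph V} {A B : Set V} (hG : Bipartition G A B) {b : V → ℕ}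
    {c d : FlexComp G b} (h : Relation.ReflTransGen (StepRel G b A B) c d) :
    ∀ {p q : V}, p ∈ c.supp → q ∈ d.supp → Flow G b A p q := by
  induction h with
  | refl => exact fun hp hq => flow_comp hG hp hq
  | tail _ hs ih =>
    rename_i m _ _
    intro p q hp hq
    obtain ⟨r, hr⟩ := m.nonempty_supp
    exact (ih hp hr).trans (flow_step hG hs hr hq)

end BFlex

/-- The relation `⪯_A`, defined on all `b`-flexible components as chains of one-step
relations `⊴_A`, is reflexive, transitive, and antisymmetric. -/
theorem stmt_16 (G : SimpleGraph V) (A B : Set V) (hG : Bipartition G A B) (b : V → ℕ) :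
    (∀ c : FlexComp G b, Relation.ReflTransGen (StepRel G b A B) c c) ∧
    (∀ c d e : FlexComp G b, Relation.ReflTransGen (StepRel G b A B) c d →
      Relation.ReflTransGen (StepRel G b A B) d e →
      Relation.ReflTransGen (StepRel G b A B) c e) ∧
    (∀ c d : FlexComp G b, Relation.ReflTransGen (StepRel G b A B) c d →
      Relation.ReflTransGen (StepRel G b A B) d c → c = d) := by
  refine ⟨fun c => Relation.ReflTransGen.refl, fun c d e h1 h2 => h1.trans h2, ?_⟩
  intro c d hcd
  have hd := Set.disjoint_left.mp hG.disjoint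
  induction hcd using Relation.ReflTransGen.head_induction_on with
  | refl => intro _; rfl
  | head hs hcd ih =>
    intro hda
    have hm := ih (hda.tail hs)
    subst hm
    rcases hs with rfl | ⟨u, hu, v, hv, h⟩ | ⟨u, hu, v, hv, h⟩
    · rfl
    · exact (BFlex.no_inev hG hu.2 (fun h => hd h hv.2) h
        (BFlex.flow_chain hG hda hv.1 hu.1)).elim
    · exact (BFlex.no_forb hG hu.2 (fun h => hd h hv.2) h
        (BFlex.flow_chain hG hda hu.1 hv.1)).elim
end

section
/- Let G be a finite bipartite graph with color classes A and B, b : V(G) → ℕ, let C be a b-flexible component, and let Z ⊆ V(G) be a b-verifying set. Then exactly one of the following holds: (i) V(C) ∩ A ⊆ Z and V(C) ∩ B ⊆ V(G) ∖ Z; or (ii) V(C) ∩ A ⊆ V(G) ∖ Z and V(C) ∩ B ⊆ Z. -/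
open scoped symmDiff

variable {V : Type} [Fintype V]

open Classical in
theorem verifying_key (G : SimpleGraph V) (b : V → ℕ) (Z : Set V) (hZ : IsVerifying G b Z)
    (N : Set (Sym2 V)) (hN : IsMaxBMatching G b N) :
    (∀ e ∈ edgesIn G Z, e ∈ N) ∧ (∀ u v, s(u, v) ∈ N → u ∈ Z ∨ v ∈ Z) := by
  obtain ⟨M, hM, hMe⟩ := hZ
  have hcard : M.ncard = N.ncard := le_antisymm (hN.2 M hM.1) (hM.2 N hN.1)
  rw [hcard] at hMe
  set F : Finset (Sym2 V) := N.toFinset with hF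
  set Y : Finset V := Zᶜ.toFinset with hY
  set E : Finset (Sym2 V) := (edgesIn G Z).toFinset with hE
  have h1 : N.ncard = F.card := Set.ncard_eq_toFinset_card' N
  have h2 : (edgesIn G Z).ncard = E.card := Set.ncard_eq_toFinset_card' _
  have h3 : bSum b Zᶜ = ∑ v ∈ Y, b v := by
    unfold bSum
    rw [finsum_mem_eq_toFinset_sum]
  have h4 : ∀ v, (F.filter (fun e => v ∈ e)).card ≤ b v := by
    intro v
    have := hN.1.2 v
    rw [Set.ncard_eq_toFinset_card'] at this
    convert this using 2
    ext e; simp [hF]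
  have h5 : ∑ v ∈ Y, (F.filter (fun e => v ∈ e)).card
      = ∑ e ∈ F, (Y.filter (fun v => v ∈ e)).card :=
    Finset.sum_card_bipartiteAbove_eq_sum_card_bipartiteBelow (fun (v : V) (e : Sym2 V) => v ∈ e)
  have h6 : ∑ v ∈ Y, (F.filter (fun e => v ∈ e)).card ≤ ∑ v ∈ Y, b v :=
    Finset.sum_le_sum (fun v _ => h4 v)
  have h7 : (F.filter (fun e => e ∈ E)).card = ∑ e ∈ F, (if e ∈ E then 1 else 0) :=
    Finset.card_filter _ _
  have hsub : F.filter (fun e => e ∈ E) ⊆ E := by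
    intro e he; exact (Finset.mem_filter.mp he).2
  have h8 := Finset.card_le_card hsub
  have h9 : ∀ e ∈ F, 1 ≤ (Y.filter (fun v => v ∈ e)).card + (if e ∈ E then 1 else 0) := by
    intro e he
    by_cases h : e ∈ E
    · simp [h]
    · have : e ∈ G.edgeSet := hN.1.1 (by simpa [hF] using he)
      have h' : ∃ v ∈ e, v ∉ Z := by
        by_contra hc
        push Not at hc
        exact h (by simp only [hE, Set.mem_toFinset]; exact ⟨this, hc⟩)
      obtain ⟨v, hv, hvZ⟩ := h'
      have : 0 < (Y.filter (fun v => v ∈ e)).card :=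
        Finset.card_pos.mpr ⟨v, by simp [hY, hv, hvZ]⟩
      omega
  have h10 : F.card = ∑ e ∈ F, 1 := by simp
  have h11 := Finset.sum_le_sum h9
  rw [Finset.sum_add_distrib, ← h7, ← h5, ← h10] at h11
  constructor
  · intro e he
    have : F.filter (fun e => e ∈ E) = E := Finset.eq_of_subset_of_card_le hsub (by omega)
    have he' : e ∈ E := by simpa [hE] using he
    rw [← this] at he'
    simpa [hF] using (Finset.mem_filter.mp he').1
  · intro u v huv
    by_contra hc
    push Not at hc
    have huvF : s(u, v) ∈ F := by simpa [hF] using huv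
    have hne : u ≠ v := G.ne_of_adj (G.mem_edgeSet.mp (hN.1.1 huv))
    have hlt : ∑ e ∈ F, 1 <
        ∑ e ∈ F, ((Y.filter (fun v => v ∈ e)).card + (if e ∈ E then 1 else 0)) := by
      refine Finset.sum_lt_sum h9 ⟨s(u, v), huvF, ?_⟩
      have : 1 < (Y.filter (fun w => w ∈ s(u, v))).card :=
        Finset.one_lt_card.mpr ⟨u, by simp [hY, hc.1], v, by simp [hY, hc.2], hne⟩
      omega
    rw [Finset.sum_add_distrib, ← h7, ← h5, ← h10] at hlt
    omega

theorem flex_reach (G : SimpleGraph V) (A B : Set V) (hG : Bipartition G A B) (b : V → ℕ)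
    (Z : Set V) (hZ : IsVerifying G b Z) {u v : V} (p : (flexGraph G b).Walk u v) :
    ((u ∈ A ↔ u ∈ Z) ↔ (v ∈ A ↔ v ∈ Z)) := by
  induction p with
  | nil => rfl
  | @cons u w v h p ih =>
    rw [← ih]
    obtain ⟨⟨M, hM, heM⟩, ⟨N, hN, heN⟩⟩ := h
    have hadj : G.Adj u w := G.mem_edgeSet.mp (hM.1.1 heM)
    have h1 := (verifying_key G b Z hZ M hM).2 u w heM
    have h2 : ¬ (u ∈ Z ∧ w ∈ Z) := fun hc =>
      heN ((verifying_key G b Z hZ N hN).1 _ ⟨hM.1.1 heM, by simpa using hc⟩)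
    have h3 := hG.between hadj
    have h4 : ∀ x, x ∈ A → x ∉ B := fun x ha hb => Set.disjoint_left.mp hG.disjoint ha hb
    have := h4 u
    have := h4 w
    tauto

/-- For every `b`-flexible component `C` and `b`-verifying set `Z`, exactly one of the
following holds: `V(C) ∩ A ⊆ Z` and `V(C) ∩ B ⊆ Zᶜ`; or `V(C) ∩ A ⊆ Zᶜ` and
`V(C) ∩ B ⊆ Z`. -/
theorem stmt_17 (G : SimpleGraph V) (A B : Set V) (hG : Bipartition G A B) (b : V → ℕ)
    (c : FlexComp G b) (Z : Set V) (hZ : IsVerifying G b Z) :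
    Xor' (c.supp ∩ A ⊆ Z ∧ c.supp ∩ B ⊆ Zᶜ) (c.supp ∩ A ⊆ Zᶜ ∧ c.supp ∩ B ⊆ Z) := by
  have hAB : ∀ x, x ∈ B ↔ x ∉ A := fun x => by
    have h1 : x ∈ A ∪ B := by rw [hG.cover]; trivial
    have h2 : x ∈ A → x ∉ B := fun ha hb => Set.disjoint_left.mp hG.disjoint ha hb
    rcases h1 with h | h <;> tauto
  obtain ⟨u, rfl⟩ := c.exists_rep
  change Xor' (((flexGraph G b).connectedComponentMk u).supp ∩ A ⊆ Z ∧ ((flexGraph G b).connectedComponentMk u).supp ∩ B ⊆ Zᶜ) (((flexGraph G b).connectedComponentMk u).supp ∩ A ⊆ Zᶜ ∧ ((flexGraph G b).connectedComponentMk u).supp ∩ B ⊆ Z)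
  have hr : ∀ v ∈ ((flexGraph G b).connectedComponentMk u).supp,
      ((v ∈ A ↔ v ∈ Z) ↔ (u ∈ A ↔ u ∈ Z)) := by
    intro v hv
    obtain ⟨p⟩ := SimpleGraph.ConnectedComponent.exact hv
    exact flex_reach G A B hG b Z hZ p
  have hu : u ∈ ((flexGraph G b).connectedComponentMk u).supp := rfl
  generalize ((flexGraph G b).connectedComponentMk u).supp = S at hr hu
  by_cases h : u ∈ A ↔ u ∈ Z
  · refine Or.inl ⟨⟨?_, ?_⟩, ?_⟩
    · rintro v ⟨hv, hA⟩; have := hr v hv; tauto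
    · rintro v ⟨hv, hB⟩; have := hr v hv; have := hAB v; simp only [Set.mem_compl_iff]; tauto
    · rintro ⟨h1, h2⟩
      have h1' : u ∈ A → u ∉ Z := fun ha => h1 ⟨hu, ha⟩
      have h2' : u ∈ B → u ∈ Z := fun ha => h2 ⟨hu, ha⟩
      have := hAB u
      tauto
  · refine Or.inr ⟨⟨?_, ?_⟩, ?_⟩
    · rintro v ⟨hv, hA⟩; have := hr v hv; simp only [Set.mem_compl_iff]; tauto
    · rintro v ⟨hv, hB⟩; have := hr v hv; have := hAB v; tauto
    · rintro ⟨h1, h2⟩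
      have h1' : u ∈ A → u ∈ Z := fun ha => h1 ⟨hu, ha⟩
      have h2' : u ∈ B → u ∉ Z := fun ha => h2 ⟨hu, ha⟩
      have := hAB u
      tauto
end
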